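/- Let n ≥ 1, α > −1, p, q ≥ 1, r ≥ 1 and δ > 0. Let {a_k} be a δ-lattice in 𝔹ₙ, let μ be a positive Borel measure on 𝔹ₙ, and set β_k = (1−|a_k|²)^{−(n+1+α)/p} μ(B(a_k,δ))^{1/q} and κ = 2p/(2p−2q+pq) for 1 ≤ q < 2. Then the embedding J_μ : A^p_α → L^q(dμ) is well defined and r-summing, with the stated bounds (constants depending only on n, p, q, r, α, δ and the lattice), in each of the following cases: (1) if 1 ≤ q < 2 and {β_k} ∈ ℓ^{κq}, then π_r(J_μ) ≤ π_1(J_μ) ≤ C‖{β_k}‖_{ℓ^{κq}}; (2) if q ≥ 2 and {β_k} ∈ ℓ^{p'} (p' = p/(p−1), with ℓ^∞ when p = 1), then π_r(J_μ) ≤ π_1(J_μ) ≤ C‖{β_k}‖_{ℓ^{p'}}; (3) if 1 ≤ r ≤ q and {β_k} ∈ ℓ^r, then π_r(J_μ) ≤ C‖{β_k}‖_{ℓ^r}; (4) if 1 ≤ q ≤ r and {β_k} ∈ ℓ^q, then π_r(J_μ) ≤ π_q(J_μ) ≤ C‖{β_k}‖_{ℓ^q}. -/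

import Mathlib

open MeasureTheory Metric Filter Complex
open scoped ENNReal NNReal BigOperators ComplexConjugate

noncomputable section

/-- `ℂⁿ` with the Euclidean norm. -/
abbrev En (n : ℕ) := EuclideanSpace ℂ (Fin n)

instance (n : ℕ) : InnerProductSpace ℝ (En n) := InnerProductSpace.complexToReal
instance (n : ℕ) : MeasurableSpace (En n) := borel _
instance (n : ℕ) : BorelSpace (En n) := ⟨rfl⟩
instance (n : ℕ) : FiniteDimensional ℝ (En n) := Module.Finite.trans ℂ (En n)

/-- The open unit ball `𝔹ₙ`. -/
def unitBall (n : ℕ) : Set (En n) := Metric.ball 0 1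

/-- The Hermitian pairing `⟨z,w⟩ = ∑ zⱼ conj wⱼ`. -/
def herm {n : ℕ} (z w : En n) : ℂ := ∑ j, z j * conj (w j)

/-- Normalized Lebesgue volume measure on `𝔹ₙ` (total mass 1). -/
def vMeas (n : ℕ) : Measure (En n) :=
  (volume (Metric.ball (0 : En n) 1))⁻¹ • volume.restrict (Metric.ball 0 1)

/-- The normalizing constant `c_α = Γ(n+1+α)/(n!·Γ(α+1))`. -/
def volConst (n : ℕ) (α : ℝ) : ℝ :=
  Real.Gamma (n + 1 + α) / ((n.factorial : ℝ) * Real.Gamma (α + 1))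

/-- The weighted measure `dv_α = c_α (1-|z|²)^α dv`. -/
def wMeas (n : ℕ) (α : ℝ) : Measure (En n) :=
  (vMeas n).withDensity fun z => ENNReal.ofReal (volConst n α * (1 - ‖z‖ ^ 2) ^ α)

-- The Möbius involution `φ_z` of `𝔹ₙ` interchanging `z` and `0`, evaluated at `w`.
open scoped Classical in
def mobius {n : ℕ} (z w : En n) : En n :=
  if z = 0 then -w
  else
    (1 - herm w z)⁻¹ •
      (z - (herm w z / herm z z) • z -
        ((Real.sqrt (1 - ‖z‖ ^ 2) : ℝ) : ℂ) • (w - (herm w z / herm z z) • z))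

/-- The Bergman metric on `𝔹ₙ`. -/
def bergmanDist {n : ℕ} (z w : En n) : ℝ :=
  (1 / 2) * Real.log ((1 + ‖mobius z w‖) / (1 - ‖mobius z w‖))

/-- The Bergman metric ball `B(z,r)`. -/
def bergmanBall {n : ℕ} (z : En n) (r : ℝ) : Set (En n) :=
  {w | w ∈ unitBall n ∧ bergmanDist z w < r}

/-- The Möbius invariant measure `dλ(z) = (1-|z|²)^{-(n+1)} dv(z)`. -/
def invMeas (n : ℕ) : Measure (En n) :=
  (vMeas n).withDensity fun z => ENNReal.ofReal ((1 - ‖z‖ ^ 2) ^ (-(n + 1 : ℝ)))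

/-- A sequence in `𝔹ₙ` which is separated (with separation constant `ε`)
in the Bergman metric. -/
def IsSeparated {n : ℕ} (a : ℕ → En n) (ε : ℝ) : Prop :=
  (∀ k, a k ∈ unitBall n) ∧ ∀ i j, i ≠ j → ε ≤ bergmanDist (a i) (a j)

/-- A `δ`-lattice in the Bergman metric. -/
def IsLattice {n : ℕ} (a : ℕ → En n) (δ : ℝ) : Prop :=
  (∀ k, a k ∈ unitBall n) ∧
    (∀ z ∈ unitBall n, ∃ k, z ∈ bergmanBall (a k) δ) ∧
      ∀ i j, i ≠ j → Disjoint (bergmanBall (a i) (δ / 4)) (bergmanBall (a j) (δ / 4))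

/-- `T` satisfies the `(r,s)`-summing inequality with constant `C`. -/
def SummingBoundWith (r s : ℝ) {X Y : Type*} [NormedAddCommGroup X] [NormedSpace ℂ X]
    [NormedAddCommGroup Y] (T : X → Y) (C : ℝ) : Prop :=
  ∀ (m : ℕ) (x : Fin m → X),
    (∑ k, ‖T (x k)‖ ^ r) ^ (1 / r) ≤
      C * ⨆ φ : {φ : X →L[ℂ] ℂ // ‖φ‖ ≤ 1}, (∑ k, ‖φ.1 (x k)‖ ^ s) ^ (1 / s)

/-- `T` is `(r,s)`-summing. -/
def IsSummingRS (r s : ℝ) {X Y : Type*} [NormedAddCommGroup X] [NormedSpace ℂ X]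
    [NormedAddCommGroup Y] (T : X → Y) : Prop :=
  ∃ C, 0 ≤ C ∧ SummingBoundWith r s T C

/-- The `(r,s)`-summing norm `π_{r,s}(T)`. -/
def summingNorm (r s : ℝ) {X Y : Type*} [NormedAddCommGroup X] [NormedSpace ℂ X]
    [NormedAddCommGroup Y] (T : X → Y) : ℝ :=
  sInf {C | 0 ≤ C ∧ SummingBoundWith r s T C}

/-- The subspace of `Lp` consisting of (a.e. classes of) functions having a representative
holomorphic on `Ω`. -/
def holoSubmodule (n : ℕ) (p : ℝ≥0∞) [Fact (1 ≤ p)] (Ω : Set (En n)) (μ : Measure (En n)) :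
    Submodule ℂ (Lp ℂ p μ) where
  carrier := {f | ∃ g : En n → ℂ, DifferentiableOn ℂ g Ω ∧ (f : En n → ℂ) =ᵐ[μ] g}
  zero_mem' := ⟨fun _ => 0, differentiableOn_const 0, Lp.coeFn_zero ℂ p μ⟩
  add_mem' := by
    rintro f f' ⟨g, hg, hfg⟩ ⟨g', hg', hfg'⟩
    exact ⟨g + g', hg.add hg', (Lp.coeFn_add f f').trans (hfg.add hfg')⟩
  smul_mem' := by
    rintro c f ⟨g, hg, hfg⟩
    exact ⟨c • g, hg.const_smul c, (Lp.coeFn_smul c f).trans (hfg.const_smul c)⟩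

/-- The weighted Bergman space `A^p_α` as a subspace of `L^p(dv_α)`. -/
abbrev BergmanSpace (n : ℕ) (p α : ℝ) [Fact (1 ≤ ENNReal.ofReal p)] :=
  ↥(holoSubmodule n (ENNReal.ofReal p) (unitBall n) (wMeas n α))

/-- The kernel `H_{p,z}(w) = (1-⟨z,w⟩)^{-b}`. -/
def Hker {n : ℕ} (b : ℝ) (z : En n) : En n → ℂ := fun w => (1 - herm z w) ^ (-(b : ℂ))

/-- The `L^p(dv_α)` norm of a function. -/
def lpNormOn (n : ℕ) (p α : ℝ) (g : En n → ℂ) : ℝ :=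
  (∫ w, ‖g w‖ ^ p ∂wMeas n α) ^ (1 / p)

/-- The normalized test function `h_{p,z} = H_{p,z}/‖H_{p,z}‖_{p,α}`
(with kernel exponent `b`). -/
def hTest (n : ℕ) (p α b : ℝ) (z : En n) : En n → ℂ := fun w =>
  Hker b z w / ((lpNormOn n p α (Hker b z) : ℝ) : ℂ)

/-- The `ℓ^s` norm of a sequence of reals, valued in `ℝ≥0∞`. -/
def ellNormE (s : ℝ) (b : ℕ → ℝ) : ℝ≥0∞ := (∑' k, ENNReal.ofReal (b k) ^ s) ^ (1 / s)

/-- The `ℓ^s` norm of a sequence of extended reals. -/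
def ellNormE' (s : ℝ) (b : ℕ → ℝ≥0∞) : ℝ≥0∞ := (∑' k, b k ^ s) ^ (1 / s)

/-- The `L^s(𝔹ₙ,dλ)` norm of a nonnegative function, valued in `ℝ≥0∞`. -/
def lamNormE (n : ℕ) (s : ℝ) (g : En n → ℝ) : ℝ≥0∞ :=
  (∫⁻ z, ENNReal.ofReal (g z) ^ s ∂invMeas n) ^ (1 / s)

/-- The Bergman projection `P_β`. -/
def bergmanProj (n : ℕ) (β : ℝ) (f : En n → ℂ) (z : En n) : ℂ :=
  ∫ w, f w * (1 - herm z w) ^ (-((n : ℂ) + 1 + (β : ℂ))) ∂wMeas n β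

/-- The conjugate Bergman projection. -/
def conjBergmanProj (n : ℕ) (β : ℝ) (f : En n → ℂ) (z : En n) : ℂ :=
  ∫ w, f w * (1 - herm w z) ^ (-((n : ℂ) + 1 + (β : ℂ))) ∂wMeas n β

/-- `g` is bounded and holomorphic on `𝔹ₙ`. -/
def BoundedHolo (n : ℕ) (g : En n → ℂ) : Prop :=
  DifferentiableOn ℂ g (unitBall n) ∧ ∃ M, ∀ z ∈ unitBall n, ‖g z‖ ≤ M

/-- The big Hankel operator `H^β_f(g) = f g - P_β(f g)` at the level of functions. -/
def hankelFun (n : ℕ) (β : ℝ) (f g : En n → ℂ) : En n → ℂ := fun z =>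
  f z * g z - bergmanProj n β (fun w => f w * g w) z

/-- The little Hankel operator `h^β_f(g) = conj-P_β(f g)` at the level of functions. -/
def littleHankelFun (n : ℕ) (β : ℝ) (f g : En n → ℂ) : En n → ℂ :=
  conjBergmanProj n β fun w => f w * g w

/-- `T : A^p_α → L^q(dv_β)` extends the big Hankel operator `H^β_f` from the
bounded holomorphic functions. -/
def ExtendsBigHankel (n : ℕ) (p q α β : ℝ) [Fact (1 ≤ ENNReal.ofReal p)]
    [Fact (1 ≤ ENNReal.ofReal q)] (f : En n → ℂ)
    (T : BergmanSpace n p α → Lp ℂ (ENNReal.ofReal q) (wMeas n β)) : Prop :=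
  ∀ g : En n → ℂ, BoundedHolo n g →
    ∀ G : BergmanSpace n p α,
      ((G : Lp ℂ (ENNReal.ofReal p) (wMeas n α)) : En n → ℂ) =ᵐ[wMeas n α] g →
        (T G : En n → ℂ) =ᵐ[wMeas n β] hankelFun n β f g

/-- `T : A^p_α → L^q(dv_β)` extends the little Hankel operator `h^β_f` from the
bounded holomorphic functions. -/
def ExtendsLittleHankel (n : ℕ) (p q α β : ℝ) [Fact (1 ≤ ENNReal.ofReal p)]
    [Fact (1 ≤ ENNReal.ofReal q)] (f : En n → ℂ)
    (T : BergmanSpace n p α → Lp ℂ (ENNReal.ofReal q) (wMeas n β)) : Prop :=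
  ∀ g : En n → ℂ, BoundedHolo n g →
    ∀ G : BergmanSpace n p α,
      ((G : Lp ℂ (ENNReal.ofReal p) (wMeas n α)) : En n → ℂ) =ᵐ[wMeas n α] g →
        (T G : En n → ℂ) =ᵐ[wMeas n β] littleHankelFun n β f g

/-- `J : A^p_α → L^q(dμ)` represents the Carleson embedding `J_μ f = f`. -/
def RepresentsEmbedding (n : ℕ) (p q α : ℝ) [Fact (1 ≤ ENNReal.ofReal p)]
    [Fact (1 ≤ ENNReal.ofReal q)] (μ : Measure (En n))
    (J : BergmanSpace n p α → Lp ℂ (ENNReal.ofReal q) μ) : Prop :=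
  ∀ (G : BergmanSpace n p α) (g : En n → ℂ), DifferentiableOn ℂ g (unitBall n) →
    ((G : Lp ℂ (ENNReal.ofReal p) (wMeas n α)) : En n → ℂ) =ᵐ[wMeas n α] g →
      (J G : En n → ℂ) =ᵐ[μ] g

/-- The IDA function `G_{q,δ}(f)(z)`. -/
def Gq (n : ℕ) (q δ : ℝ) (f : En n → ℂ) (z : En n) : ℝ :=
  ⨅ h : {h : En n → ℂ // DifferentiableOn ℂ h (bergmanBall z δ)},
    ((vMeas n (bergmanBall z δ)).toReal⁻¹ *
        ∫ w in bergmanBall z δ, ‖f w - h.1 w‖ ^ q ∂vMeas n) ^ (1 / q)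

/-- The average of `f` over the Bergman ball `B(z,δ)`. -/
def ballAvg (n : ℕ) (δ : ℝ) (f : En n → ℂ) (z : En n) : ℂ :=
  ((vMeas n (bergmanBall z δ)).toReal⁻¹ : ℝ) • ∫ w in bergmanBall z δ, f w ∂vMeas n

/-- The local mean oscillation `MO_{q,δ}(f)(z)`. -/
def MOq (n : ℕ) (q δ : ℝ) (f : En n → ℂ) (z : En n) : ℝ :=
  ((vMeas n (bergmanBall z δ)).toReal⁻¹ *
      ∫ w in bergmanBall z δ, ‖f w - ballAvg n δ f z‖ ^ q ∂vMeas n) ^ (1 / q)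

/-- The integral operator `V_{b,β}`. -/
def Vop (n : ℕ) (b β : ℝ) (f : En n → ℂ) (z : En n) : ℂ :=
  ((volConst n (b + β) / volConst n β : ℝ) : ℂ) * (((1 - ‖z‖ ^ 2) ^ b : ℝ) : ℂ) *
    ∫ w, f w * (1 - herm z w) ^ (-((n : ℂ) + 1 + (β : ℂ) + (b : ℂ))) ∂wMeas n β

/-- The norm of the invariant gradient `|∇̃f(z)| = |∇(f ∘ φ_z)(0)|`. -/
def invGradNorm (n : ℕ) (f : En n → ℂ) (z : En n) : ℝ :=
  ‖fderiv ℂ (fun w => f (mobius z w)) 0‖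

/-- The Besov space norm `‖f‖_{B^γ_s}`, valued in `ℝ≥0∞`. -/
def besovNorm (n : ℕ) (s γ : ℝ) (f : En n → ℂ) : ℝ≥0∞ :=
  (∫⁻ z, ENNReal.ofReal ((1 - ‖z‖ ^ 2) ^ γ * invGradNorm n f z) ^ s ∂invMeas n) ^ (1 / s)


/-- The lattice quantity `β_k = (1-|a_k|²)^{-(n+1+α)/p}·μ(B(a_k,δ))^{1/q}`. -/
def carlesonBeta (n : ℕ) (p q α δ : ℝ) (μ : Measure (En n)) (a : ℕ → En n) (k : ℕ) :
    ℝ≥0∞ :=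
  ENNReal.ofReal ((1 - ‖a k‖ ^ 2) ^ (-(((n : ℝ) + 1 + α) / p))) *
    μ (bergmanBall (a k) δ) ^ ((1 : ℝ) / q)

/-!
The Möbius involution at a lattice point `a_k` carries the Bergman ball around `a_k` to a fixed
ball around the origin. With `F_k(u) = (1 - |a_k|²)^((n+1+α)/p) f(φ_{a_k}(u))`, the sub-mean value
property bounds `‖f‖_{L^q(μ)}` by the `ℓ^q` norm of `β_k m_k(f)`, where `m_k(f)` is the `L^ρ` mean
of `F_k` over a slightly larger ball.

Since Bergman balls around the lattice points have bounded overlap, the evaluations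
`f ↦ (F_k(u))_k` are bounded from `A^p_α` to `ℓ^p`, uniformly for `u` in a compact subset of the
ball. In particular each `F_k(u)` is a uniformly bounded functional, so that the `m_k` are
uniformly `ρ`-summing. For `ρ ≤ q` this gives `π_ρ(J_μ) ≲ ‖β‖_ρ`, which is case (3) for `ρ = r`,
and case (4) for `ρ = q` because `π_r` decreases in `r`.

For cases (1) and (2) take `ρ = 1`. Hölder's inequality replaces the `ℓ^q` norm of `β_k m_k(f)` by
the `ℓ²` norm of `γ_k m_k(f)` with `γ ∈ ℓ^{p'}`. By Khinchine's inequality this square function is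
comparable to an average of the moduli of the functionals `∑ ± γ_k F_k(u)`, whose norms are at most
`‖γ‖_{p'}` times a constant.
-/

open scoped InnerProductSpace

section AddHaar

variable {E : Type*} [NormedAddCommGroup E] [NormedSpace ℂ E] [FiniteDimensional ℂ E]
  [MeasurableSpace E] [BorelSpace E] (ν : Measure E) [ν.IsAddHaarMeasure]

theorem addHaar_image_complex_linearMap (f : E →ₗ[ℂ] E) (S : Set E) :
    ν (f '' S) = ENNReal.ofReal (‖LinearMap.det f‖ ^ 2) * ν S := by
  let _ := NormedSpace.complexToReal (E := E)
  have : FiniteDimensional ℝ E := Module.Finite.trans ℂ E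
  have h := Measure.addHaar_image_linearMap ν (f.restrictScalars ℝ) S
  rwa [LinearMap.det_restrictScalars, Algebra.norm_complex_apply, normSq_eq_norm_sq,
    abs_of_nonneg (sq_nonneg _)] at h

theorem measurePreserving_smul_of_norm_eq_one {c : ℂ} (hc : ‖c‖ = 1) :
    MeasurePreserving (fun u : E => c • u) ν ν := by
  have hc0 : c ≠ 0 := norm_ne_zero_iff.1 (hc ▸ one_ne_zero)
  refine ⟨by fun_prop, Measure.ext fun S hS => ?_⟩
  have hpre : (fun u : E => c • u) ⁻¹' S = (c⁻¹ • LinearMap.id : E →ₗ[ℂ] E) '' S := by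
    ext u
    constructor
    · exact fun hu => ⟨c • u, hu, by simp [smul_smul, hc0]⟩
    · rintro ⟨v, hv, rfl⟩
      simpa [smul_smul, hc0] using hv
  rw [Measure.map_apply (by fun_prop) hS, hpre, addHaar_image_complex_linearMap,
    LinearMap.det_smul, norm_mul, norm_pow, norm_inv, hc]
  simp

end AddHaar

section InnerProduct

variable {E : Type*} [NormedAddCommGroup E] {a z w u : E}

theorem one_sub_norm_sq_pos (hz : ‖z‖ < 1) : 0 < 1 - ‖z‖ ^ 2 := by
  nlinarith [norm_nonneg z]

/-- The defect `√(1 - |a|²)` of a point `a` of the unit ball. -/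
def defect (a : E) : ℝ := √(1 - ‖a‖ ^ 2)

theorem defect_pos (ha : ‖a‖ < 1) : 0 < defect a := Real.sqrt_pos.2 (one_sub_norm_sq_pos ha)

theorem defect_sq (ha : ‖a‖ < 1) : defect a ^ 2 = 1 - ‖a‖ ^ 2 :=
  Real.sq_sqrt (one_sub_norm_sq_pos ha).le

theorem ofReal_defect_ne_zero (ha : ‖a‖ < 1) : (defect a : ℂ) ≠ 0 :=
  ofReal_ne_zero.2 (defect_pos ha).ne'

theorem one_add_ofReal_defect_ne_zero (a : E) : (1 : ℂ) + defect a ≠ 0 := by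
  have : (0 : ℝ) < 1 + defect a := add_pos_of_pos_of_nonneg one_pos (Real.sqrt_nonneg _)
  exact_mod_cast this.ne'

variable [InnerProductSpace ℂ E]

theorem one_sub_norm_le_norm_one_sub_inner (ha : ‖a‖ ≤ 1) : 1 - ‖u‖ ≤ ‖1 - ⟪a, u⟫_ℂ‖ := by
  have hle : ‖⟪a, u⟫_ℂ‖ ≤ ‖u‖ :=
    (norm_inner_le_norm a u).trans (mul_le_of_le_one_left (norm_nonneg u) ha)
  have htri : ‖(1 : ℂ)‖ - ‖⟪a, u⟫_ℂ‖ ≤ ‖1 - ⟪a, u⟫_ℂ‖ := norm_sub_norm_le _ _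
  rw [norm_one] at htri
  linarith

theorem norm_one_sub_inner_le_one_add_norm (ha : ‖a‖ ≤ 1) : ‖1 - ⟪a, u⟫_ℂ‖ ≤ 1 + ‖u‖ := by
  have hle : ‖⟪a, u⟫_ℂ‖ ≤ ‖u‖ :=
    (norm_inner_le_norm a u).trans (mul_le_of_le_one_left (norm_nonneg u) ha)
  have htri : ‖1 - ⟪a, u⟫_ℂ‖ ≤ ‖(1 : ℂ)‖ + ‖⟪a, u⟫_ℂ‖ := norm_sub_le _ _
  rw [norm_one] at htri
  linarith

theorem norm_one_sub_inner_pos (ha : ‖a‖ ≤ 1) (hu : ‖u‖ < 1) : 0 < ‖1 - ⟪a, u⟫_ℂ‖ :=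
  (sub_pos.2 hu).trans_le (one_sub_norm_le_norm_one_sub_inner ha)

theorem one_sub_inner_ne_zero (ha : ‖a‖ ≤ 1) (hu : ‖u‖ < 1) : 1 - ⟪a, u⟫_ℂ ≠ 0 :=
  norm_pos_iff.1 (norm_one_sub_inner_pos ha hu)

theorem one_sub_norm_sq_le_two_mul_norm_one_sub_inner (hz : ‖z‖ ≤ 1) (hw : ‖w‖ ≤ 1) :
    1 - ‖w‖ ^ 2 ≤ 2 * ‖1 - ⟪z, w⟫_ℂ‖ := by
  have := one_sub_norm_le_norm_one_sub_inner (u := w) hz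
  nlinarith [norm_nonneg w]

theorem norm_one_sub_inner_comm (z w : E) : ‖1 - ⟪z, w⟫_ℂ‖ = ‖1 - ⟪w, z⟫_ℂ‖ := by
  rw [← norm_conj (1 - ⟪w, z⟫_ℂ), map_sub, map_one, inner_conj_symm]

theorem ofReal_norm_one_sub_inner_sq (z w : E) :
    ((‖1 - ⟪z, w⟫_ℂ‖ ^ 2 : ℝ) : ℂ) = (1 - ⟪z, w⟫_ℂ) * (1 - ⟪w, z⟫_ℂ) := by
  have := mul_conj' (1 - ⟪z, w⟫_ℂ)
  rw [map_sub, map_one, inner_conj_symm] at this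
  rw [this, ofReal_pow]

theorem ofReal_norm_sq (z : E) : ((‖z‖ ^ 2 : ℝ) : ℂ) = ⟪z, z⟫_ℂ := by
  rw [inner_self_eq_norm_sq_to_K, ofReal_pow]
  rfl

theorem norm_one_sub_inner_self (hz : ‖z‖ < 1) : ‖1 - ⟪z, z⟫_ℂ‖ = 1 - ‖z‖ ^ 2 := by
  rw [← ofReal_norm_sq, ← ofReal_one, ← ofReal_sub, norm_real,
    Real.norm_of_nonneg (one_sub_norm_sq_pos hz).le]

theorem inner_self_eq_one_sub_defect_sq (ha : ‖a‖ < 1) :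
    ⟪a, a⟫_ℂ = 1 - (defect a : ℂ) ^ 2 := by
  rw [← ofReal_norm_sq, ← ofReal_pow, defect_sq ha]
  push_cast
  ring

end InnerProduct

section NonisotropicMap

variable {E : Type*} [NormedAddCommGroup E] [InnerProductSpace ℂ E] {a u : E}

/-- The linear map scaling by `1 - |a|²` along `a` and by `√(1 - |a|²)` orthogonally to `a`.
Its translate by `a` maps small balls onto sets comparable with Bergman balls about `a`. -/
def nonisotropicMap (a : E) : E →ₗ[ℂ] E :=
  (defect a : ℂ) •
    LinearMap.transvection (-(1 + (defect a : ℂ))⁻¹ • (innerSL ℂ a : E →ₗ[ℂ] ℂ)) a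

theorem nonisotropicMap_apply (a u : E) :
    nonisotropicMap a u =
      (defect a : ℂ) • (u - ((1 + (defect a : ℂ))⁻¹ * ⟪a, u⟫_ℂ) • a) := by
  simp [nonisotropicMap, LinearMap.transvection.apply, sub_eq_add_neg]

theorem det_nonisotropicMap [FiniteDimensional ℂ E] (ha : ‖a‖ < 1) :
    LinearMap.det (nonisotropicMap a) = (defect a : ℂ) ^ (Module.finrank ℂ E + 1) := by
  have h1 := one_add_ofReal_defect_ne_zero a
  have h2 := inner_self_eq_one_sub_defect_sq ha
  have hdet : 1 + (-(1 + (defect a : ℂ))⁻¹ • (innerSL ℂ a : E →ₗ[ℂ] ℂ)) a = defect a := by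
    simp only [LinearMap.smul_apply, ContinuousLinearMap.coe_coe, innerSL_apply_apply, h2,
      smul_eq_mul]
    field_simp
    ring
  rw [nonisotropicMap, LinearMap.det_smul, LinearMap.transvection.det, hdet, pow_succ]

theorem inner_nonisotropicMap (ha : ‖a‖ < 1) (u : E) :
    ⟪a, nonisotropicMap a u⟫_ℂ = (1 - ⟪a, a⟫_ℂ) * ⟪a, u⟫_ℂ := by
  have h1 := one_add_ofReal_defect_ne_zero a
  simp only [nonisotropicMap_apply, inner_smul_right, inner_sub_right,
    inner_self_eq_one_sub_defect_sq ha]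
  field_simp
  ring

theorem inner_nonisotropicMap_self (ha : ‖a‖ < 1) (u : E) :
    ⟪nonisotropicMap a u, nonisotropicMap a u⟫_ℂ =
      (1 - ⟪a, a⟫_ℂ) * (⟪u, u⟫_ℂ - ⟪u, a⟫_ℂ * ⟪a, u⟫_ℂ) := by
  have h1 := one_add_ofReal_defect_ne_zero a
  simp only [nonisotropicMap_apply, inner_smul_right, inner_smul_left, inner_sub_left,
    inner_sub_right, map_mul, map_inv₀, map_add, map_one, conj_ofReal, inner_conj_symm,
    inner_self_eq_one_sub_defect_sq ha]
  field_simp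
  ring

theorem one_sub_inner_add_nonisotropicMap (ha : ‖a‖ < 1) (u : E) :
    1 - ⟪a, a + nonisotropicMap a u⟫_ℂ = (1 - ⟪a, a⟫_ℂ) * (1 - ⟪a, u⟫_ℂ) := by
  rw [inner_add_right, inner_nonisotropicMap ha]
  ring

theorem one_sub_norm_sq_add_nonisotropicMap (ha : ‖a‖ < 1) (u : E) :
    1 - ‖a + nonisotropicMap a u‖ ^ 2 =
      (1 - ‖a‖ ^ 2) * (‖1 - ⟪a, u⟫_ℂ‖ ^ 2 - ‖u‖ ^ 2) := by
  have hleft : ⟪nonisotropicMap a u, a⟫_ℂ = (1 - ⟪a, a⟫_ℂ) * ⟪u, a⟫_ℂ := by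
    rw [← inner_conj_symm, inner_nonisotropicMap ha, map_mul, inner_conj_symm, map_sub, map_one,
      inner_conj_symm]
  apply ofReal_injective
  rw [ofReal_mul, ofReal_sub, ofReal_sub, ofReal_sub, ofReal_norm_one_sub_inner_sq,
    ofReal_norm_sq, ofReal_norm_sq, ofReal_norm_sq, inner_add_left, inner_add_right,
    inner_add_right, hleft, inner_nonisotropicMap ha, inner_nonisotropicMap_self ha, ofReal_one]
  ring

theorem le_one_sub_norm_sq_add_nonisotropicMap (ha : ‖a‖ < 1) (hu : ‖u‖ ≤ 1 / 4) :
    (1 - ‖a‖ ^ 2) / 2 ≤ 1 - ‖a + nonisotropicMap a u‖ ^ 2 := by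
  have hs := one_sub_norm_sq_pos ha
  have hlow := one_sub_norm_le_norm_one_sub_inner (u := u) ha.le
  have hfac : 1 / 2 ≤ ‖1 - ⟪a, u⟫_ℂ‖ ^ 2 - ‖u‖ ^ 2 := by nlinarith [norm_nonneg u]
  rw [one_sub_norm_sq_add_nonisotropicMap ha]
  nlinarith

theorem one_sub_norm_sq_add_nonisotropicMap_le (ha : ‖a‖ < 1) (hu : ‖u‖ ≤ 1 / 4) :
    1 - ‖a + nonisotropicMap a u‖ ^ 2 ≤ 2 * (1 - ‖a‖ ^ 2) := by
  have hs := one_sub_norm_sq_pos ha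
  have hupp := norm_one_sub_inner_le_one_add_norm (u := u) ha.le
  have hfac : ‖1 - ⟪a, u⟫_ℂ‖ ^ 2 - ‖u‖ ^ 2 ≤ 2 := by nlinarith [norm_nonneg (1 - ⟪a, u⟫_ℂ)]
  rw [one_sub_norm_sq_add_nonisotropicMap ha]
  nlinarith

theorem norm_add_nonisotropicMap_lt_one (ha : ‖a‖ < 1) (hu : ‖u‖ ≤ 1 / 4) :
    ‖a + nonisotropicMap a u‖ < 1 := by
  have h := le_one_sub_norm_sq_add_nonisotropicMap ha hu
  have hs := one_sub_norm_sq_pos ha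
  nlinarith [norm_nonneg (a + nonisotropicMap a u)]

theorem exists_nonisotropicMap_eq (ha : ‖a‖ < 1) (v : E) :
    ∃ u, nonisotropicMap a u = v ∧
      ‖u‖ ≤ ‖v‖ / defect a + ‖⟪a, v⟫_ℂ‖ / (1 - ‖a‖ ^ 2) := by
  have hd := defect_pos ha
  have hd0 := ofReal_defect_ne_zero ha
  have hd1 := one_add_ofReal_defect_ne_zero a
  refine ⟨(defect a : ℂ)⁻¹ • v + (⟪a, v⟫_ℂ / ((defect a : ℂ) ^ 2 * (1 + defect a))) • a, ?_, ?_⟩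
  · simp only [nonisotropicMap_apply, inner_add_right, inner_smul_right,
      inner_self_eq_one_sub_defect_sq ha]
    match_scalars
    · field_simp
    · field_simp
      ring
  · have hnorm : ‖(defect a : ℂ) ^ 2 * (1 + defect a)‖ = defect a ^ 2 * (1 + defect a) := by
      rw [← ofReal_one, ← ofReal_add, ← ofReal_pow, ← ofReal_mul, norm_real,
        Real.norm_of_nonneg (by positivity)]
    refine (norm_add_le _ _).trans (add_le_add ?_ ?_)
    · rw [norm_smul, norm_inv, norm_real, Real.norm_of_nonneg hd.le, div_eq_inv_mul]
    · rw [norm_smul, norm_div, hnorm, ← defect_sq ha]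
      refine (mul_le_of_le_one_right (by positivity) ha.le).trans ?_
      gcongr
      exact le_mul_of_one_le_right (by positivity) (by linarith)

theorem isOpenMap_add_nonisotropicMap [FiniteDimensional ℂ E] (ha : ‖a‖ < 1) :
    IsOpenMap fun u => a + nonisotropicMap a u := by
  have hsurj : Function.Surjective (nonisotropicMap a) := fun w =>
    (exists_nonisotropicMap_eq ha w).imp fun _ h => h.1
  exact (isOpenMap_add_left a).comp
    ((nonisotropicMap a).toContinuousLinearMap.isOpenMap hsurj)

variable [FiniteDimensional ℂ E] [MeasurableSpace E] [BorelSpace E]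

theorem addHaar_image_nonisotropicMap (ν : Measure E) [ν.IsAddHaarMeasure] (ha : ‖a‖ < 1)
    (S : Set E) :
    ν ((fun u => a + nonisotropicMap a u) '' S) =
      ENNReal.ofReal ((1 - ‖a‖ ^ 2) ^ (Module.finrank ℂ E + 1)) * ν S := by
  rw [← Set.image_image (fun x => a + x) (nonisotropicMap a), Set.image_add_left,
    measure_preimage_add, addHaar_image_complex_linearMap, det_nonisotropicMap ha, norm_pow,
    norm_real, Real.norm_of_nonneg (defect_pos ha).le, ← defect_sq ha, ← pow_mul, ← pow_mul,
    mul_comm 2]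

theorem measurableEmbedding_add_nonisotropicMap (ha : ‖a‖ < 1) :
    MeasurableEmbedding fun u => a + nonisotropicMap a u := by
  have hinj : Function.Injective (nonisotropicMap a) := LinearMap.injective_iff_surjective.2
    fun w => (exists_nonisotropicMap_eq ha w).imp fun _ h => h.1
  have hcont : Continuous (nonisotropicMap a) := LinearMap.continuous_of_finiteDimensional _
  exact (Topology.IsOpenEmbedding.of_continuous_injective_isOpenMap (continuous_const.add hcont)
    ((add_right_injective a).comp hinj) (isOpenMap_add_nonisotropicMap ha)).measurableEmbedding

theorem setLIntegral_image_nonisotropicMap (ν : Measure E) [ν.IsAddHaarMeasure] (ha : ‖a‖ < 1)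
    (S : Set E) (f : E → ℝ≥0∞) :
    ∫⁻ z in (fun u => a + nonisotropicMap a u) '' S, f z ∂ν =
      ENNReal.ofReal ((1 - ‖a‖ ^ 2) ^ (Module.finrank ℂ E + 1)) *
        ∫⁻ u in S, f (a + nonisotropicMap a u) ∂ν := by
  have he := measurableEmbedding_add_nonisotropicMap ha
  have hsurj : Function.Surjective fun u => a + nonisotropicMap a u := fun w =>
    (exists_nonisotropicMap_eq ha (w - a)).imp fun u h => by simp only [h.1, add_sub_cancel]
  have hmap : ν = ENNReal.ofReal ((1 - ‖a‖ ^ 2) ^ (Module.finrank ℂ E + 1)) •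
      ν.map fun u => a + nonisotropicMap a u := by
    ext A
    rw [Measure.smul_apply, smul_eq_mul, he.map_apply, ← addHaar_image_nonisotropicMap ν ha,
      Set.image_preimage_eq A hsurj]
  nth_rewrite 1 [hmap]
  rw [Measure.restrict_smul, lintegral_smul_measure, smul_eq_mul, he.restrict_map,
    he.lintegral_map, Set.preimage_image_eq S he.injective]

end NonisotropicMap

section Mobius

variable {n : ℕ} {a z w ζ : En n}

theorem mem_unitBall : z ∈ unitBall n ↔ ‖z‖ < 1 := mem_ball_zero_iff

theorem herm_eq_inner (z w : En n) : herm z w = ⟪w, z⟫_ℂ := by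
  simp only [herm, PiLp.inner_apply, RCLike.inner_apply]

theorem mobius_eq (ha : ‖a‖ < 1) (z : En n) :
    mobius a z = (1 - ⟪a, z⟫_ℂ)⁻¹ •
      ((1 - ⟪a, z⟫_ℂ / (1 + (defect a : ℂ))) • a - (defect a : ℂ) • z) := by
  by_cases h : a = 0
  · simp [mobius, defect, h]
  · have hd := one_add_ofReal_defect_ne_zero a
    have haa : ⟪a, a⟫_ℂ ≠ 0 := inner_self_ne_zero.2 h
    have hproj : ⟪a, z⟫_ℂ / (1 + defect a) = (1 - defect a) * (⟪a, z⟫_ℂ / ⟪a, a⟫_ℂ) := by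
      rw [inner_self_eq_one_sub_defect_sq ha] at haa ⊢
      field_simp
      ring
    simp only [mobius, h, if_false, herm_eq_inner]
    rw [hproj, ← defect]
    module

theorem one_sub_inner_mobius (ha : ‖a‖ < 1) (hz : ‖z‖ < 1) (hw : ‖w‖ < 1) :
    1 - ⟪mobius a w, mobius a z⟫_ℂ =
      (1 - ⟪a, a⟫_ℂ) * (1 - ⟪w, z⟫_ℂ) / ((1 - ⟪a, z⟫_ℂ) * (1 - ⟪w, a⟫_ℂ)) := by
  have h1 := one_sub_inner_ne_zero ha.le hz
  have h2 := one_sub_inner_ne_zero hw.le ha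
  have hd := one_add_ofReal_defect_ne_zero a
  simp only [mobius_eq ha, inner_smul_left, inner_smul_right, inner_sub_left, inner_sub_right,
    map_sub, map_one, map_div₀, map_add, map_inv₀, conj_ofReal, inner_conj_symm,
    inner_self_eq_one_sub_defect_sq ha]
  field_simp
  ring

theorem one_sub_inner_self_mobius (ha : ‖a‖ < 1) (hz : ‖z‖ < 1) :
    1 - ⟪a, mobius a z⟫_ℂ = (1 - ⟪a, a⟫_ℂ) / (1 - ⟪a, z⟫_ℂ) := by
  have h1 := one_sub_inner_ne_zero ha.le hz
  have hd := one_add_ofReal_defect_ne_zero a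
  simp only [mobius_eq ha, inner_smul_right, inner_sub_right, inner_self_eq_one_sub_defect_sq ha]
  field_simp
  ring

theorem one_sub_norm_mobius_sq (ha : ‖a‖ < 1) (hz : ‖z‖ < 1) :
    1 - ‖mobius a z‖ ^ 2 = (1 - ‖a‖ ^ 2) * (1 - ‖z‖ ^ 2) / ‖1 - ⟪a, z⟫_ℂ‖ ^ 2 := by
  apply ofReal_injective
  rw [ofReal_div, ofReal_mul, ofReal_norm_one_sub_inner_sq]
  simp only [ofReal_sub, ofReal_one, ofReal_norm_sq]
  exact one_sub_inner_mobius ha hz hz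

theorem norm_mobius_lt_one (ha : ‖a‖ < 1) (hz : ‖z‖ < 1) : ‖mobius a z‖ < 1 := by
  have h1 := one_sub_norm_sq_pos ha
  have h2 := one_sub_norm_sq_pos hz
  have h3 := norm_one_sub_inner_pos ha.le hz
  have : 0 < 1 - ‖mobius a z‖ ^ 2 := by rw [one_sub_norm_mobius_sq ha hz]; positivity
  nlinarith [norm_nonneg (mobius a z)]

theorem mapsTo_mobius (ha : ‖a‖ < 1) : Set.MapsTo (mobius a) (unitBall n) (unitBall n) :=
  fun _ hz => mem_unitBall.2 (norm_mobius_lt_one ha (mem_unitBall.1 hz))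

theorem mobius_mobius (ha : ‖a‖ < 1) (hz : ‖z‖ < 1) : mobius a (mobius a z) = z := by
  have h1 := one_sub_inner_ne_zero ha.le hz
  have hd0 := ofReal_defect_ne_zero ha
  have hd := one_add_ofReal_defect_ne_zero a
  have hinner : ⟪a, mobius a z⟫_ℂ = 1 - (defect a : ℂ) ^ 2 / (1 - ⟪a, z⟫_ℂ) := by
    have := one_sub_inner_self_mobius ha hz
    rw [inner_self_eq_one_sub_defect_sq ha, sub_sub_cancel] at this
    rw [← this, sub_sub_cancel]
  rw [mobius_eq ha (mobius a z), hinner, mobius_eq ha z]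
  generalize (defect a : ℂ) = d at *
  generalize ⟪a, z⟫_ℂ = x at *
  match_scalars
  · field_simp
    ring
  · field_simp
    ring

theorem differentiableOn_mobius (ha : ‖a‖ < 1) : DifferentiableOn ℂ (mobius a) (unitBall n) := by
  have hin : Differentiable ℂ fun z : En n => ⟪a, z⟫_ℂ := (innerSL ℂ a).differentiable
  refine DifferentiableOn.congr (.fun_smul (.inv (by fun_prop) fun z hz => ?_) (by fun_prop))
    fun z _ => mobius_eq ha z
  exact one_sub_inner_ne_zero ha.le (mem_unitBall.1 hz)

theorem norm_one_sub_inner_mul_le (hz : ‖z‖ < 1) (hw : ‖w‖ < 1) (hζ : ‖ζ‖ < 1) :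
    ‖1 - ⟪w, z⟫_ℂ‖ * (1 - ‖ζ‖ ^ 2) ≤ 2 * (‖1 - ⟪ζ, z⟫_ℂ‖ * ‖1 - ⟪w, ζ⟫_ℂ‖) := by
  have hz' := norm_mobius_lt_one hζ hz
  have htwo : ‖1 - ⟪mobius ζ w, mobius ζ z⟫_ℂ‖ ≤ 2 :=
    (norm_one_sub_inner_le_one_add_norm (norm_mobius_lt_one hζ hw).le).trans (by linarith)
  have h1 := norm_one_sub_inner_pos hζ.le hz
  have h2 := norm_one_sub_inner_pos hw.le hζ
  rw [one_sub_inner_mobius hζ hz hw, norm_div, norm_mul, norm_mul, norm_one_sub_inner_self hζ,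
    div_le_iff₀ (by positivity)] at htwo
  linarith

theorem norm_mobius_add_nonisotropicMap_le {u : En n} (ha : ‖a‖ < 1) (hu : ‖u‖ ≤ 1 / 4) :
    ‖mobius a (a + nonisotropicMap a u)‖ ≤ 2 * ‖u‖ := by
  have hs := one_sub_norm_sq_pos ha
  have hlow := one_sub_norm_le_norm_one_sub_inner (u := u) ha.le
  have hpos := norm_one_sub_inner_pos ha.le (show ‖u‖ < 1 by linarith)
  have hsq : ‖mobius a (a + nonisotropicMap a u)‖ ^ 2 = ‖u‖ ^ 2 / ‖1 - ⟪a, u⟫_ℂ‖ ^ 2 := by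
    rw [← sub_sub_cancel 1 (‖mobius a (a + nonisotropicMap a u)‖ ^ 2),
      one_sub_norm_mobius_sq ha (norm_add_nonisotropicMap_lt_one ha hu),
      one_sub_inner_add_nonisotropicMap ha, norm_mul, norm_one_sub_inner_self ha,
      one_sub_norm_sq_add_nonisotropicMap ha]
    field_simp
    ring
  refine abs_le_of_sq_le_sq' ?_ (by positivity) |>.2
  rw [hsq, div_le_iff₀ (by positivity)]
  nlinarith [sq_nonneg ‖u‖, show 1 ≤ 4 * ‖1 - ⟪a, u⟫_ℂ‖ ^ 2 by nlinarith]

theorem bergmanDist_eq_artanh (ha : ‖a‖ < 1) (hz : ‖z‖ < 1) :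
    bergmanDist a z = Real.artanh ‖mobius a z‖ := by
  have h := norm_mobius_lt_one ha hz
  rw [bergmanDist, Real.artanh_eq_half_log ⟨by linarith [norm_nonneg (mobius a z)], h.le⟩]

theorem mem_bergmanBall_iff (ha : ‖a‖ < 1) {δ : ℝ} :
    z ∈ bergmanBall a δ ↔ ‖z‖ < 1 ∧ ‖mobius a z‖ < Real.tanh δ := by
  rw [bergmanBall, Set.mem_ofPred_eq, mem_unitBall]
  refine and_congr_right fun hz => ?_
  have h := norm_mobius_lt_one ha hz
  have h0 := norm_nonneg (mobius a z)
  rw [bergmanDist_eq_artanh ha hz, ← Real.artanh_lt_artanh_iff ⟨by linarith, h⟩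
    ⟨Real.neg_one_lt_tanh δ, Real.tanh_lt_one δ⟩, Real.artanh_tanh]

end Mobius

/-- The points `z, w` of the unit ball satisfy `cosh² d(z,w) ≤ M` for the Bergman metric `d`.
This multiplicative form avoids logarithms and makes sense in any inner product space. -/
def BergmanClose {E : Type*} [NormedAddCommGroup E] [InnerProductSpace ℂ E] (M : ℝ) (z w : E) :
    Prop :=
  ‖1 - ⟪z, w⟫_ℂ‖ ^ 2 ≤ M * ((1 - ‖z‖ ^ 2) * (1 - ‖w‖ ^ 2))

namespace BergmanClose

variable {E : Type*} [NormedAddCommGroup E] [InnerProductSpace ℂ E] {a z w u : E} {M M' : ℝ}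

theorem symm (h : BergmanClose M z w) : BergmanClose M w z := by
  rwa [BergmanClose, norm_one_sub_inner_comm, mul_comm (1 - ‖w‖ ^ 2)]

theorem norm_one_sub_inner_le (h : BergmanClose M z w) (hz : ‖z‖ < 1) (hw : ‖w‖ < 1)
    (hM : 0 ≤ M) : ‖1 - ⟪z, w⟫_ℂ‖ ≤ 2 * M * (1 - ‖z‖ ^ 2) := by
  have hs := one_sub_norm_sq_pos hz
  have hmul : ‖1 - ⟪z, w⟫_ℂ‖ * ‖1 - ⟪z, w⟫_ℂ‖ ≤
      2 * M * (1 - ‖z‖ ^ 2) * ‖1 - ⟪z, w⟫_ℂ‖ := by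
    calc ‖1 - ⟪z, w⟫_ℂ‖ * ‖1 - ⟪z, w⟫_ℂ‖
        ≤ M * ((1 - ‖z‖ ^ 2) * (1 - ‖w‖ ^ 2)) := by rw [← sq]; exact h
      _ ≤ M * ((1 - ‖z‖ ^ 2) * (2 * ‖1 - ⟪z, w⟫_ℂ‖)) := by
          gcongr
          exact one_sub_norm_sq_le_two_mul_norm_one_sub_inner hz.le hw.le
      _ = _ := by ring
  exact le_of_mul_le_mul_right hmul (norm_one_sub_inner_pos hz.le hw)

theorem one_sub_norm_sq_le (h : BergmanClose M z w) (hz : ‖z‖ < 1) (hw : ‖w‖ < 1)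
    (hM : 0 ≤ M) : 1 - ‖w‖ ^ 2 ≤ 4 * M * (1 - ‖z‖ ^ 2) := by
  have h1 := one_sub_norm_sq_le_two_mul_norm_one_sub_inner hz.le hw.le
  have h2 := h.norm_one_sub_inner_le hz hw hM
  linarith

theorem norm_inner_sub_le (h : BergmanClose M z w) (hz : ‖z‖ < 1) (hw : ‖w‖ < 1)
    (hM : 0 ≤ M) : ‖⟪z, w - z⟫_ℂ‖ ≤ (2 * M + 1) * (1 - ‖z‖ ^ 2) := by
  have hdecomp : ⟪z, w - z⟫_ℂ = (1 - ⟪z, z⟫_ℂ) - (1 - ⟪z, w⟫_ℂ) := by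
    rw [inner_sub_right]
    ring
  have htri := norm_sub_le (1 - ⟪z, z⟫_ℂ) (1 - ⟪z, w⟫_ℂ)
  rw [← hdecomp, norm_one_sub_inner_self hz] at htri
  linarith [h.norm_one_sub_inner_le hz hw hM]

theorem norm_sub_le_mul_defect (h : BergmanClose M z w) (hz : ‖z‖ < 1) (hw : ‖w‖ < 1)
    (hM : 0 ≤ M) : ‖w - z‖ ≤ (2 * M + 1) * defect z := by
  have hs := one_sub_norm_sq_pos hz
  have hd := defect_pos hz
  have hD := h.norm_one_sub_inner_le hz hw hM
  have hre : 1 - RCLike.re ⟪w, z⟫_ℂ ≤ ‖1 - ⟪z, w⟫_ℂ‖ := by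
    have := re_le_norm (1 - ⟪z, w⟫_ℂ)
    rwa [sub_re, one_re, ← RCLike.re_eq_complex_re, inner_re_symm] at this
  refine abs_le_of_sq_le_sq' ?_ (by positivity) |>.2
  rw [mul_pow, defect_sq hz, norm_sub_sq (𝕜 := ℂ)]
  nlinarith [norm_nonneg w, norm_nonneg z, mul_nonneg hM hs.le,
    mul_nonneg (mul_nonneg hM hM) hs.le]

theorem mem_image_nonisotropicMap (h : BergmanClose M z w) (hz : ‖z‖ < 1) (hw : ‖w‖ < 1)
    (hM : 0 ≤ M) : w ∈ (fun u => z + nonisotropicMap z u) '' closedBall 0 (4 * M + 2) := by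
  obtain ⟨u, hu, hle⟩ := exists_nonisotropicMap_eq hz (w - z)
  refine ⟨u, mem_closedBall_zero_iff.2 ?_, by simp only [hu, add_sub_cancel]⟩
  have h1 := (div_le_iff₀ (defect_pos hz)).2 (h.norm_sub_le_mul_defect hz hw hM)
  have h2 := (div_le_iff₀ (one_sub_norm_sq_pos hz)).2 (h.norm_inner_sub_le hz hw hM)
  linarith

theorem add_nonisotropicMap (ha : ‖a‖ < 1) (hu : ‖u‖ ≤ 1 / 4) :
    BergmanClose 4 a (a + nonisotropicMap a u) := by
  have hlow := one_sub_norm_le_norm_one_sub_inner (u := u) ha.le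
  have hfac : ‖1 - ⟪a, u⟫_ℂ‖ ^ 2 ≤ 4 * (‖1 - ⟪a, u⟫_ℂ‖ ^ 2 - ‖u‖ ^ 2) := by
    nlinarith [norm_nonneg u]
  rw [BergmanClose, one_sub_inner_add_nonisotropicMap ha, norm_mul, norm_one_sub_inner_self ha,
    one_sub_norm_sq_add_nonisotropicMap ha]
  nlinarith [mul_le_mul_of_nonneg_left hfac (sq_nonneg (1 - ‖a‖ ^ 2))]

theorem mobius {n : ℕ} {a u : En n} (ha : ‖a‖ < 1) (hu : ‖u‖ < 1) :
    BergmanClose (1 / (1 - ‖u‖ ^ 2)) a (mobius a u) := by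
  have hpos := norm_one_sub_inner_pos ha.le hu
  have hs := one_sub_norm_sq_pos hu
  rw [BergmanClose, one_sub_inner_self_mobius ha hu, one_sub_norm_mobius_sq ha hu, norm_div,
    norm_one_sub_inner_self ha]
  apply le_of_eq
  field_simp

theorem mono (h : BergmanClose M z w) (hz : ‖z‖ < 1) (hw : ‖w‖ < 1) (hM : M ≤ M') :
    BergmanClose M' z w := by
  have h1 := one_sub_norm_sq_pos hz
  have h2 := one_sub_norm_sq_pos hw
  exact le_trans h (by gcongr)

theorem trans {n : ℕ} {z ζ w : En n} (h : BergmanClose M z ζ) (h' : BergmanClose M' ζ w)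
    (hz : ‖z‖ < 1) (hζ : ‖ζ‖ < 1) (hw : ‖w‖ < 1) : BergmanClose (4 * M * M') z w := by
  have hs := one_sub_norm_sq_pos hζ
  refine le_of_mul_le_mul_right ?_ (pow_pos hs 2)
  calc ‖1 - ⟪z, w⟫_ℂ‖ ^ 2 * (1 - ‖ζ‖ ^ 2) ^ 2
      ≤ (2 * (‖1 - ⟪ζ, w⟫_ℂ‖ * ‖1 - ⟪z, ζ⟫_ℂ‖)) ^ 2 := by
        rw [← mul_pow]
        exact pow_le_pow_left₀ (by positivity) (norm_one_sub_inner_mul_le hw hz hζ) 2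
    _ = 4 * (‖1 - ⟪z, ζ⟫_ℂ‖ ^ 2 * ‖1 - ⟪ζ, w⟫_ℂ‖ ^ 2) := by ring
    _ ≤ 4 * ((M * ((1 - ‖z‖ ^ 2) * (1 - ‖ζ‖ ^ 2))) *
          (M' * ((1 - ‖ζ‖ ^ 2) * (1 - ‖w‖ ^ 2)))) := by
        gcongr
        · exact (sq_nonneg _).trans h
        · exact h
        · exact h'
    _ = _ := by ring

end BergmanClose

section Packing

variable {n : ℕ}

theorem IsLattice.norm_lt_one {a : ℕ → En n} {δ : ℝ} (ha : IsLattice a δ) (k : ℕ) :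
    ‖a k‖ < 1 := mem_unitBall.1 (ha.1 k)

theorem exists_image_nonisotropicMap_subset_bergmanBall (n : ℕ) {δ : ℝ} (hδ : 0 < δ) :
    ∃ c : ℝ, 0 < c ∧ c ≤ 1 / 4 ∧ ∀ a : En n, ‖a‖ < 1 →
      (fun u => a + nonisotropicMap a u) '' ball 0 c ⊆ bergmanBall a δ := by
  have htanh : 0 < Real.tanh δ := by
    rw [Real.tanh_eq_sinh_div_cosh]
    exact div_pos (Real.sinh_pos_iff.2 hδ) (Real.cosh_pos δ)
  refine ⟨min (1 / 4) (Real.tanh δ / 2), by positivity, min_le_left _ _, fun a ha => ?_⟩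
  rintro _ ⟨u, hu, rfl⟩
  obtain ⟨hu4, huδ⟩ := lt_min_iff.1 (mem_ball_zero_iff.1 hu)
  refine (mem_bergmanBall_iff ha).2 ⟨norm_add_nonisotropicMap_lt_one ha hu4.le, ?_⟩
  linarith [norm_mobius_add_nonisotropicMap_le ha hu4.le]

theorem card_mul_volume_le {ι : Type*} {a : ι → En n} {c M : ℝ} (hc : c ≤ 1 / 4) (hM : 0 < M)
    (ha : ∀ k, ‖a k‖ < 1)
    (hdisj : Pairwise (Function.onFun Disjoint fun k =>
      (fun u => a k + nonisotropicMap (a k) u) '' ball 0 c))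
    {ζ : En n} (hζ : ‖ζ‖ < 1) (T : Finset ι) (hT : ∀ k ∈ T, BergmanClose M (a k) ζ) :
    T.card * (ENNReal.ofReal (((1 - ‖ζ‖ ^ 2) / (4 * M)) ^ (n + 1)) * volume (ball (0 : En n) c)) ≤
      ENNReal.ofReal ((1 - ‖ζ‖ ^ 2) ^ (n + 1)) *
        volume (closedBall (0 : En n) (4 * (4 * M * 4) + 2)) := by
  have hs := one_sub_norm_sq_pos hζ
  have hlow : ∀ k ∈ T,
      ENNReal.ofReal (((1 - ‖ζ‖ ^ 2) / (4 * M)) ^ (n + 1)) * volume (ball (0 : En n) c) ≤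
        volume ((fun u => a k + nonisotropicMap (a k) u) '' ball 0 c) := by
    intro k hk
    rw [addHaar_image_nonisotropicMap volume (ha k), finrank_euclideanSpace_fin]
    gcongr
    rw [div_le_iff₀ (by positivity), mul_comm]
    exact (hT k hk).one_sub_norm_sq_le (ha k) hζ hM.le
  have hsub : ⋃ k ∈ T, (fun u => a k + nonisotropicMap (a k) u) '' ball 0 c ⊆
      (fun u => ζ + nonisotropicMap ζ u) '' closedBall 0 (4 * (4 * M * 4) + 2) := by
    refine Set.iUnion₂_subset fun k hk => ?_
    rintro _ ⟨u, hu, rfl⟩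
    have hu4 : ‖u‖ ≤ 1 / 4 := (mem_ball_zero_iff.1 hu).le.trans hc
    have hlt := norm_add_nonisotropicMap_lt_one (ha k) hu4
    exact ((hT k hk).symm.trans (.add_nonisotropicMap (ha k) hu4) hζ (ha k)
      hlt).mem_image_nonisotropicMap hζ hlt (by positivity)
  calc _ = ∑ _k ∈ T,
        ENNReal.ofReal (((1 - ‖ζ‖ ^ 2) / (4 * M)) ^ (n + 1)) * volume (ball (0 : En n) c) := by
        rw [Finset.sum_const, nsmul_eq_mul]
    _ ≤ ∑ k ∈ T, volume ((fun u => a k + nonisotropicMap (a k) u) '' ball 0 c) :=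
        Finset.sum_le_sum hlow
    _ = volume (⋃ k ∈ T, (fun u => a k + nonisotropicMap (a k) u) '' ball 0 c) :=
        (measure_biUnion_finset (hdisj.set_pairwise T) fun k _ =>
          (isOpenMap_add_nonisotropicMap (ha k) _ isOpen_ball).measurableSet).symm
    _ ≤ volume ((fun u => ζ + nonisotropicMap ζ u) '' closedBall 0 (4 * (4 * M * 4) + 2)) :=
        measure_mono hsub
    _ = _ := by rw [addHaar_image_nonisotropicMap volume hζ, finrank_euclideanSpace_fin]

theorem IsLattice.exists_card_le {a : ℕ → En n} {δ : ℝ} (ha : IsLattice a δ) (hδ : 0 < δ)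
    {M : ℝ} (hM : 0 < M) :
    ∃ N : ℕ, ∀ ζ : En n, ‖ζ‖ < 1 → ∀ T : Finset ℕ, (∀ k ∈ T, BergmanClose M (a k) ζ) →
      T.card ≤ N := by
  obtain ⟨c, hc0, hc, hsub⟩ :=
    exists_image_nonisotropicMap_subset_bergmanBall n (show 0 < δ / 4 by linarith)
  set v : ℝ≥0∞ := ENNReal.ofReal (((4 * M)⁻¹) ^ (n + 1)) * volume (ball (0 : En n) c)
  set V : ℝ≥0∞ := volume (closedBall (0 : En n) (4 * (4 * M * 4) + 2))
  have hv0 : v ≠ 0 :=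
    mul_ne_zero (ENNReal.ofReal_pos.2 (by positivity)).ne' (measure_ball_pos _ _ hc0).ne'
  have hv : v ≠ ⊤ := ENNReal.mul_ne_top ENNReal.ofReal_ne_top measure_ball_lt_top.ne
  have hV : V / v ≠ ⊤ := ENNReal.div_ne_top measure_closedBall_lt_top.ne hv0
  obtain ⟨N, hN⟩ := ENNReal.exists_nat_gt hV
  refine ⟨N, fun ζ hζ T hT => ?_⟩
  have hs := one_sub_norm_sq_pos hζ
  have hpack := card_mul_volume_le hc hM ha.norm_lt_one
    (fun i j hij => (ha.2.2 i j hij).mono (hsub _ (ha.norm_lt_one i)) (hsub _ (ha.norm_lt_one j)))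
    hζ T hT
  have hcancel : (T.card : ℝ≥0∞) * v ≤ V := by
    rw [div_eq_mul_inv, mul_pow, ENNReal.ofReal_mul (by positivity), mul_assoc,
      mul_left_comm] at hpack
    exact (ENNReal.mul_le_mul_iff_right (ENNReal.ofReal_pos.2 (by positivity)).ne'
      ENNReal.ofReal_ne_top).1 hpack
  have hle : (T.card : ℝ≥0∞) ≤ N :=
    ((ENNReal.le_div_iff_mul_le (.inl hv0) (.inl hv)).2 hcancel).trans hN.le
  exact_mod_cast hle

end Packing

section SubMeanValue

variable {F : Type*} [NormedAddCommGroup F]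

theorem enorm_integral_rpow_le_lintegral {Ω : Type*} [MeasurableSpace Ω] {P : Measure Ω}
    [IsProbabilityMeasure P] [NormedSpace ℝ F] {f : Ω → F} (hf : AEStronglyMeasurable f P)
    {r : ℝ} (hr : 1 ≤ r) : ‖∫ x, f x ∂P‖ₑ ^ r ≤ ∫⁻ x, ‖f x‖ₑ ^ r ∂P := by
  have hr0 : 0 < r := one_pos.trans_le hr
  have hle : ‖∫ x, f x ∂P‖ₑ ≤ eLpNorm f (ENNReal.ofReal r) P := by
    refine (enorm_integral_le_lintegral_enorm f).trans ?_
    rw [← eLpNorm_one_eq_lintegral_enorm]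
    exact eLpNorm_le_eLpNorm_of_exponent_le (ENNReal.one_le_ofReal.2 hr) hf
  rwa [eLpNorm_eq_lintegral_rpow_enorm_toReal (ENNReal.ofReal_pos.2 hr0).ne'
    ENNReal.ofReal_ne_top, ENNReal.toReal_ofReal hr0.le, one_div,
    ENNReal.le_rpow_inv_iff hr0] at hle

theorem enorm_average_rpow_le_laverage {Ω : Type*} [MeasurableSpace Ω] {ν : Measure Ω}
    [IsFiniteMeasure ν] [NeZero ν] [NormedSpace ℝ F] {f : Ω → F}
    (hf : AEStronglyMeasurable f ν) {r : ℝ} (hr : 1 ≤ r) :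
    ‖⨍ x, f x ∂ν‖ₑ ^ r ≤ ⨍⁻ x, ‖f x‖ₑ ^ r ∂ν :=
  enorm_integral_rpow_le_lintegral (hf.smul_measure _) hr

variable [NormedSpace ℂ F] [CompleteSpace F]

theorem enorm_rpow_le_laverage_circle {f : ℂ → F} {c : ℂ} {R r : ℝ}
    (hf : DiffContOnCl ℂ f (ball c |R|)) (hr : 1 ≤ r) :
    ‖f c‖ₑ ^ r ≤ ⨍⁻ θ in Set.Ioc 0 (2 * Real.pi), ‖f (circleMap c R θ)‖ₑ ^ r ∂volume := by
  have hpi := Real.two_pi_pos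
  have hmean : f c = ⨍ θ in Set.Ioc 0 (2 * Real.pi), f (circleMap c R θ) := by
    rw [← hf.circleAverage, Real.circleAverage_eq_intervalAverage, Set.uIoc_of_le hpi.le]
  have : NeZero (volume.restrict (Set.Ioc 0 (2 * Real.pi))) :=
    ⟨by simp [Measure.restrict_eq_zero, Real.pi_pos]⟩
  have hcont : Continuous fun θ => f (circleMap c R θ) :=
    hf.continuousOn_ball.comp_continuous (continuous_circleMap c R) fun θ =>
      sphere_subset_closedBall (circleMap_mem_sphere' c R θ)
  rw [hmean]
  exact enorm_average_rpow_le_laverage hcont.aestronglyMeasurable hr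

variable {E : Type*} [NormedAddCommGroup E] [NormedSpace ℂ E] [FiniteDimensional ℂ E]
  [MeasurableSpace E] [BorelSpace E] (ν : Measure E) [ν.IsAddHaarMeasure]

theorem setLIntegral_ball_add_smul {c : ℂ} (hc : ‖c‖ = 1) (v : E) (ρ : ℝ) (f : E → ℝ≥0∞) :
    ∫⁻ u in ball 0 ρ, f (v + c • u) ∂ν = ∫⁻ u in ball v ρ, f u ∂ν := by
  have hpre : (fun u : E => v + c • u) ⁻¹' ball v ρ = ball 0 ρ := by
    ext u
    simp [norm_smul, hc]
  have hc0 : c ≠ 0 := norm_ne_zero_iff.1 (hc ▸ one_ne_zero)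
  rw [← hpre]
  exact ((measurePreserving_add_left ν v).comp
    (measurePreserving_smul_of_norm_eq_one ν hc)).setLIntegral_comp_preimage_emb
    ((measurableEmbedding_addLeft v).comp (measurableEmbedding_const_smul₀ hc0)) f _

theorem enorm_rpow_mul_addHaar_ball_le {h : E → F} {v : E} {ρ r : ℝ}
    (hh : DifferentiableOn ℂ h (ball v ρ)) (hr : 1 ≤ r) :
    ‖h v‖ₑ ^ r * ν (ball 0 ρ) ≤ ∫⁻ u in ball v ρ, ‖h u‖ₑ ^ r ∂ν := by
  have := FiniteDimensional.proper ℂ E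
  have hmaps {ζ : ℂ} (hζ : ‖ζ‖ ≤ 1) {u : E} (hu : u ∈ ball 0 ρ) : v + ζ • u ∈ ball v ρ := by
    rw [mem_ball_zero_iff] at hu
    rw [mem_ball_iff_norm, add_sub_cancel_left, norm_smul]
    nlinarith [norm_nonneg u]
  have hcircle : ∀ u ∈ ball (0 : E) ρ, ‖h v‖ₑ ^ r ≤
      ⨍⁻ θ in Set.Ioc 0 (2 * Real.pi), ‖h (v + circleMap 0 1 θ • u)‖ₑ ^ r ∂volume := by
    intro u hu
    have hd : DifferentiableOn ℂ (fun ζ : ℂ => h (v + ζ • u)) (closedBall 0 |1|) :=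
      hh.comp (f := fun ζ : ℂ => v + ζ • u) (by fun_prop) fun ζ hζ =>
        hmaps (by simpa using hζ) hu
    simpa only [zero_smul, add_zero] using
      enorm_rpow_le_laverage_circle (hd.mono closure_ball_subset_closedBall).diffContOnCl hr
  have hmeas : AEMeasurable (Function.uncurry fun (u : E) (θ : ℝ) =>
      ‖h (v + circleMap 0 1 θ • u)‖ₑ ^ r)
      ((ν.restrict (ball 0 ρ)).prod (volume.restrict (Set.Ioc 0 (2 * Real.pi)))) := by
    rw [Measure.prod_restrict]
    refine ContinuousOn.aemeasurable ?_ (measurableSet_ball.prod measurableSet_Ioc)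
    refine (ENNReal.continuous_rpow_const.comp_continuousOn
      (hh.continuousOn.comp ?_ fun x hx => hmaps (by simp) hx.1).enorm)
    fun_prop
  calc ‖h v‖ₑ ^ r * ν (ball 0 ρ)
      ≤ ∫⁻ u in ball 0 ρ, ⨍⁻ θ in Set.Ioc 0 (2 * Real.pi),
          ‖h (v + circleMap 0 1 θ • u)‖ₑ ^ r ∂volume ∂ν := by
        rw [← setLIntegral_const]
        exact setLIntegral_mono' measurableSet_ball hcircle
    _ = ⨍⁻ θ in Set.Ioc 0 (2 * Real.pi), ∫⁻ u in ball 0 ρ,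
          ‖h (v + circleMap 0 1 θ • u)‖ₑ ^ r ∂ν ∂volume := by
        simp only [setLAverage_eq']
        refine lintegral_lintegral_swap ?_
        rw [Measure.prod_smul_right]
        exact hmeas.smul_measure _
    _ = ∫⁻ u in ball v ρ, ‖h u‖ₑ ^ r ∂ν := by
        simp only [fun θ => setLIntegral_ball_add_smul ν (c := circleMap 0 1 θ) (by simp) v ρ
          fun u => ‖h u‖ₑ ^ r]
        exact setLAverage_const (by simp [Real.pi_pos]) measure_Ioc_lt_top.ne _

end SubMeanValue

section Ellipsoid

variable {E : Type*} [NormedAddCommGroup E] [InnerProductSpace ℂ E]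

/-- The set of points `z + T u` with `‖u‖ < 1/4`, where `T = nonisotropicMap z`: an ellipsoid of
radii comparable to `1 - ‖z‖²` in the direction of `z` and to `defect z` orthogonally to it. It
plays the role of a Bergman ball of fixed radius around `z`. -/
def bergmanEllipsoid (z : E) : Set E := (fun u => z + nonisotropicMap z u) '' ball 0 (1 / 4)

variable {z w : E}

theorem norm_lt_one_of_mem_bergmanEllipsoid (hz : ‖z‖ < 1) (hw : w ∈ bergmanEllipsoid z) :
    ‖w‖ < 1 := by
  obtain ⟨u, hu, rfl⟩ := hw
  exact norm_add_nonisotropicMap_lt_one hz (mem_ball_zero_iff.1 hu).le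

theorem BergmanClose.of_mem_bergmanEllipsoid (hz : ‖z‖ < 1) (hw : w ∈ bergmanEllipsoid z) :
    BergmanClose 4 z w := by
  obtain ⟨u, hu, rfl⟩ := hw
  exact .add_nonisotropicMap hz (mem_ball_zero_iff.1 hu).le

theorem mul_one_sub_norm_sq_rpow_le (hz : ‖z‖ < 1) (hw : w ∈ bergmanEllipsoid z) (α : ℝ) :
    (2 : ℝ) ^ (-|α|) * (1 - ‖z‖ ^ 2) ^ α ≤ (1 - ‖w‖ ^ 2) ^ α := by
  obtain ⟨u, hu, rfl⟩ := hw
  have hs := one_sub_norm_sq_pos hz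
  have hu' : ‖u‖ ≤ 1 / 4 := (mem_ball_zero_iff.1 hu).le
  have hlow := le_one_sub_norm_sq_add_nonisotropicMap hz hu'
  have hupp := one_sub_norm_sq_add_nonisotropicMap_le hz hu'
  rcases le_total 0 α with h | h
  · rw [abs_of_nonneg h, Real.rpow_neg two_pos.le, inv_mul_eq_div, ← Real.div_rpow hs.le two_pos.le]
    exact Real.rpow_le_rpow (by positivity) hlow h
  · rw [abs_of_nonpos h, neg_neg, ← Real.mul_rpow two_pos.le hs.le]
    exact Real.rpow_le_rpow_of_nonpos (by linarith) hupp h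

variable [FiniteDimensional ℂ E] [MeasurableSpace E] [BorelSpace E]

theorem measurableSet_bergmanEllipsoid (hz : ‖z‖ < 1) : MeasurableSet (bergmanEllipsoid z) :=
  (isOpenMap_add_nonisotropicMap hz _ isOpen_ball).measurableSet

theorem rpow_mul_enorm_le_setLIntegral_bergmanEllipsoid {F : Type*} [NormedAddCommGroup F]
    [NormedSpace ℂ F] [CompleteSpace F] (ν : Measure E) [ν.IsAddHaarMeasure] {g : E → F}
    (hg : DifferentiableOn ℂ g (ball 0 1)) (hz : ‖z‖ < 1) {r : ℝ} (hr : 1 ≤ r) :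
    ENNReal.ofReal ((1 - ‖z‖ ^ 2) ^ (Module.finrank ℂ E + 1)) *
        (‖g z‖ₑ ^ r * ν (ball 0 (1 / 4))) ≤
      ∫⁻ w in bergmanEllipsoid z, ‖g w‖ₑ ^ r ∂ν := by
  have hT : Differentiable ℂ fun u => z + nonisotropicMap z u :=
    (nonisotropicMap z).toContinuousLinearMap.differentiable.const_add z
  have hcomp : DifferentiableOn ℂ (fun u => g (z + nonisotropicMap z u)) (ball 0 (1 / 4)) :=
    hg.comp hT.differentiableOn fun u hu => mem_ball_zero_iff.2
      (norm_lt_one_of_mem_bergmanEllipsoid hz (Set.mem_image_of_mem _ hu))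
  rw [bergmanEllipsoid, setLIntegral_image_nonisotropicMap ν hz]
  gcongr
  simpa only [map_zero, add_zero] using enorm_rpow_mul_addHaar_ball_le ν hcomp hr

end Ellipsoid

section WeightedMeasure

variable {n : ℕ} {α : ℝ}

theorem volConst_pos (hα : -1 < α) : 0 < volConst n α := by
  have hn : (0 : ℝ) ≤ n := n.cast_nonneg
  have h1 : 0 < Real.Gamma (n + 1 + α) := Real.Gamma_pos_of_pos (by linarith)
  have h2 : 0 < Real.Gamma (α + 1) := Real.Gamma_pos_of_pos (by linarith)
  unfold volConst
  positivity

theorem measurable_weight : Measurable fun z : En n =>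
    ENNReal.ofReal (volConst n α * (1 - ‖z‖ ^ 2) ^ α) := by
  fun_prop

theorem volume_unitBall_mul_setLIntegral_wMeas {S : Set (En n)} (hS : MeasurableSet S)
    (hSb : S ⊆ unitBall n) (f : En n → ℝ≥0∞) :
    volume (unitBall n) * ∫⁻ z in S, f z ∂wMeas n α =
      ∫⁻ z in S, ENNReal.ofReal (volConst n α * (1 - ‖z‖ ^ 2) ^ α) * f z := by
  have hrestrict : (vMeas n).restrict S = (volume (unitBall n))⁻¹ • volume.restrict S := by
    rw [vMeas, Measure.restrict_smul, Measure.restrict_restrict hS]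
    exact congrArg (fun A => (volume (unitBall n))⁻¹ • volume.restrict A)
      (Set.inter_eq_self_of_subset_left hSb)
  rw [wMeas, restrict_withDensity hS, lintegral_withDensity_eq_lintegral_mul_non_measurable _
    measurable_weight (Eventually.of_forall fun _ => ENNReal.ofReal_lt_top), hrestrict,
    lintegral_smul_measure, smul_eq_mul, ← mul_assoc, unitBall, ENNReal.mul_inv_cancel
      (measure_ball_pos volume (0 : En n) one_pos).ne' measure_ball_lt_top.ne, one_mul]
  rfl

theorem eqOn_unitBall_of_ae_eq {F : Type*} [TopologicalSpace F] [T2Space F] (hα : -1 < α)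
    {f g : En n → F} (hf : ContinuousOn f (unitBall n)) (hg : ContinuousOn g (unitBall n))
    (h : f =ᵐ[wMeas n α] g) : Set.EqOn f g (unitBall n) := by
  refine Measure.eqOn_open_of_ae_eq (μ := volume) ?_ isOpen_ball hf hg
  have hball := (ae_withDensity_iff measurable_weight).1 h
  rw [vMeas, Measure.ae_ennreal_smul_measure_iff
    (ENNReal.inv_ne_zero.2 measure_ball_lt_top.ne)] at hball
  filter_upwards [hball, ae_restrict_mem measurableSet_ball] with z hz hzb
  have hs := one_sub_norm_sq_pos (mem_unitBall.1 hzb)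
  have hc := volConst_pos (n := n) hα
  exact hz (ENNReal.ofReal_pos.2 (by positivity)).ne'

theorem mul_setLIntegral_bergmanEllipsoid_le (hα : -1 < α) {z : En n} (hz : ‖z‖ < 1)
    (f : En n → ℝ≥0∞) :
    ENNReal.ofReal (volConst n α * 2 ^ (-|α|) * (1 - ‖z‖ ^ 2) ^ α) *
        ∫⁻ w in bergmanEllipsoid z, f w ≤
      volume (unitBall n) * ∫⁻ w in bergmanEllipsoid z, f w ∂wMeas n α := by
  rw [volume_unitBall_mul_setLIntegral_wMeas (measurableSet_bergmanEllipsoid hz)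
    fun w hw => mem_unitBall.2 (norm_lt_one_of_mem_bergmanEllipsoid hz hw),
    ← lintegral_const_mul' _ _ ENNReal.ofReal_ne_top]
  refine setLIntegral_mono' (measurableSet_bergmanEllipsoid hz) fun w hw => ?_
  have hc := volConst_pos (n := n) hα
  rw [mul_assoc (volConst n α)]
  gcongr
  exact mul_one_sub_norm_sq_rpow_le hz hw α

theorem exists_rpow_mul_enorm_le (n : ℕ) (hα : -1 < α) {r : ℝ} (hr : 1 ≤ r) :
    ∃ C : ℝ≥0, ∀ g : En n → ℂ, DifferentiableOn ℂ g (unitBall n) → ∀ z : En n, ‖z‖ < 1 →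
      ENNReal.ofReal ((1 - ‖z‖ ^ 2) ^ ((n : ℝ) + 1 + α)) * ‖g z‖ₑ ^ r ≤
        C * ∫⁻ w in bergmanEllipsoid z, ‖g w‖ₑ ^ r ∂wMeas n α := by
  have hc := volConst_pos (n := n) hα
  set c : ℝ≥0∞ := ENNReal.ofReal (volConst n α * 2 ^ (-|α|)) * volume (ball (0 : En n) (1 / 4))
  have hc0 : c ≠ 0 := mul_ne_zero (ENNReal.ofReal_pos.2 (by positivity)).ne'
    (measure_ball_pos _ _ (by norm_num)).ne'
  have hct : c ≠ ⊤ := ENNReal.mul_ne_top ENNReal.ofReal_ne_top measure_ball_lt_top.ne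
  have hC : c⁻¹ * volume (unitBall n) ≠ ⊤ :=
    ENNReal.mul_ne_top (ENNReal.inv_ne_top.2 hc0) measure_ball_lt_top.ne
  refine ⟨(c⁻¹ * volume (unitBall n)).toNNReal, fun g hg z hz => ?_⟩
  have hs := one_sub_norm_sq_pos hz
  have hleb := rpow_mul_enorm_le_setLIntegral_bergmanEllipsoid volume hg hz hr
  rw [finrank_euclideanSpace_fin] at hleb
  have hpow : (1 - ‖z‖ ^ 2) ^ ((n : ℝ) + 1 + α) = (1 - ‖z‖ ^ 2) ^ α * (1 - ‖z‖ ^ 2) ^ (n + 1) := by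
    rw [add_comm, Real.rpow_add hs, ← Nat.cast_succ, Real.rpow_natCast]
  rw [ENNReal.coe_toNNReal hC, mul_assoc, ← ENNReal.mul_le_iff_le_inv hc0 hct]
  calc c * (ENNReal.ofReal ((1 - ‖z‖ ^ 2) ^ ((n : ℝ) + 1 + α)) * ‖g z‖ₑ ^ r)
      = ENNReal.ofReal (volConst n α * 2 ^ (-|α|) * (1 - ‖z‖ ^ 2) ^ α) *
          (ENNReal.ofReal ((1 - ‖z‖ ^ 2) ^ (n + 1)) *
            (‖g z‖ₑ ^ r * volume (ball (0 : En n) (1 / 4)))) := by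
        rw [hpow, ENNReal.ofReal_mul (by positivity), ENNReal.ofReal_mul (by positivity)]
        ring
    _ ≤ ENNReal.ofReal (volConst n α * 2 ^ (-|α|) * (1 - ‖z‖ ^ 2) ^ α) *
          ∫⁻ w in bergmanEllipsoid z, ‖g w‖ₑ ^ r := by gcongr
    _ ≤ _ := mul_setLIntegral_bergmanEllipsoid_le hα hz _

end WeightedMeasure

section LatticeSum

variable {n : ℕ} {α δ : ℝ} {a : ℕ → En n}

theorem measurable_indicator_of_continuousOn {X Y : Type*} [TopologicalSpace X]
    [MeasurableSpace X] [OpensMeasurableSpace X] [TopologicalSpace Y] [MeasurableSpace Y]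
    [BorelSpace Y] [Zero Y] {h : X → Y} {U : Set X} (hU : MeasurableSet U)
    (hh : ContinuousOn h U) : Measurable (U.indicator h) := by
  classical
  rw [← Set.piecewise_eq_indicator]
  exact hh.measurable_piecewise continuousOn_const hU

theorem IsLattice.exists_sum_setLIntegral_le (ha : IsLattice a δ) (hδ : 0 < δ) {M : ℝ}
    (hM : 0 < M) :
    ∃ N : ℕ, ∀ z : ℕ → En n, (∀ k, ‖z k‖ < 1) → (∀ k, BergmanClose M (a k) (z k)) →
      ∀ (P : Measure (En n)) (f : En n → ℝ≥0∞), Measurable f → ∀ K : Finset ℕ,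
        ∑ k ∈ K, ∫⁻ w in bergmanEllipsoid (z k), f w ∂P ≤ N * ∫⁻ w, f w ∂P := by
  classical
  obtain ⟨N, hN⟩ := ha.exists_card_le hδ (M := 4 * M * 4) (by positivity)
  refine ⟨N, fun z hz haz P f hf K => ?_⟩
  have hmeas (k : ℕ) := measurableSet_bergmanEllipsoid (hz k)
  calc ∑ k ∈ K, ∫⁻ w in bergmanEllipsoid (z k), f w ∂P
      = ∫⁻ w, ∑ k ∈ K, (bergmanEllipsoid (z k)).indicator f w ∂P := by
        rw [lintegral_finsetSum _ fun k _ => hf.indicator (hmeas k)]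
        exact Finset.sum_congr rfl fun k _ => (lintegral_indicator (hmeas k) f).symm
    _ ≤ ∫⁻ w, N * f w ∂P := lintegral_mono fun w => by
        simp only [Set.indicator]
        rw [← Finset.sum_filter, Finset.sum_const, nsmul_eq_mul]
        gcongr
        by_cases hw : ‖w‖ < 1
        · refine hN w hw _ fun k hk => (haz k).trans ?_ (ha.norm_lt_one k) (hz k) hw
          exact .of_mem_bergmanEllipsoid (hz k) (Finset.mem_filter.1 hk).2
        · rw [Finset.filter_false_of_mem fun k _ hk =>
            hw (norm_lt_one_of_mem_bergmanEllipsoid (hz k) hk), Finset.card_empty]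
          exact N.zero_le
    _ = N * ∫⁻ w, f w ∂P := lintegral_const_mul _ hf

theorem IsLattice.exists_tsum_rpow_mul_enorm_le (ha : IsLattice a δ) (hδ : 0 < δ) (hα : -1 < α)
    {r : ℝ} (hr : 1 ≤ r) {M : ℝ} (hM : 0 < M) :
    ∃ C : ℝ≥0, ∀ g : En n → ℂ, DifferentiableOn ℂ g (unitBall n) →
      ∀ z : ℕ → En n, (∀ k, ‖z k‖ < 1) → (∀ k, BergmanClose M (a k) (z k)) →
        ∑' k, ENNReal.ofReal ((1 - ‖a k‖ ^ 2) ^ ((n : ℝ) + 1 + α)) * ‖g (z k)‖ₑ ^ r ≤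
          C * ∫⁻ w, ‖g w‖ₑ ^ r ∂wMeas n α := by
  obtain ⟨C, hpt⟩ := exists_rpow_mul_enorm_le n hα hr
  obtain ⟨N, hN⟩ := ha.exists_sum_setLIntegral_le hδ hM
  have he : 0 < (n : ℝ) + 1 + α := by linarith [(n.cast_nonneg : (0 : ℝ) ≤ n)]
  set e := (n : ℝ) + 1 + α
  refine ⟨((4 * M) ^ e).toNNReal * C * N, fun g hg z hz haz => ?_⟩
  set g' := (unitBall n).indicator g
  have hgg : Set.EqOn g' g (unitBall n) := Set.eqOn_indicator
  have hterm (k : ℕ) : ENNReal.ofReal ((1 - ‖a k‖ ^ 2) ^ e) * ‖g (z k)‖ₑ ^ r ≤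
      ENNReal.ofReal ((4 * M) ^ e) *
        (C * ∫⁻ w in bergmanEllipsoid (z k), ‖g' w‖ₑ ^ r ∂wMeas n α) := by
    have hs := one_sub_norm_sq_pos (hz k)
    have hcmp := (haz k).symm.one_sub_norm_sq_le (hz k) (ha.norm_lt_one k) hM.le
    have hle : (1 - ‖a k‖ ^ 2) ^ e ≤ (4 * M) ^ e * (1 - ‖z k‖ ^ 2) ^ e := by
      rw [← Real.mul_rpow (by positivity) hs.le]
      exact Real.rpow_le_rpow (one_sub_norm_sq_pos (ha.norm_lt_one k)).le hcmp he.le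
    calc _ ≤ ENNReal.ofReal ((4 * M) ^ e * (1 - ‖z k‖ ^ 2) ^ e) * ‖g (z k)‖ₑ ^ r := by gcongr
      _ ≤ _ := by
        rw [ENNReal.ofReal_mul (by positivity), mul_assoc, ← hgg (mem_unitBall.2 (hz k))]
        exact mul_le_mul_right (hpt g' (hg.congr hgg) _ (hz k)) _
  have hmeas : Measurable fun w => ‖g' w‖ₑ ^ r :=
    (measurable_indicator_of_continuousOn measurableSet_ball hg.continuousOn).enorm.pow_const r
  refine ENNReal.summable.tsum_le_of_sum_le fun K => (Finset.sum_le_sum fun k _ => hterm k).trans ?_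
  rw [← Finset.mul_sum, ← Finset.mul_sum]
  calc _ ≤ ENNReal.ofReal ((4 * M) ^ e) * (C * (N * ∫⁻ w, ‖g' w‖ₑ ^ r ∂wMeas n α)) := by
        gcongr
        exact hN z hz haz _ _ hmeas K
    _ ≤ ENNReal.ofReal ((4 * M) ^ e) * (C * (N * ∫⁻ w, ‖g w‖ₑ ^ r ∂wMeas n α)) := by
        gcongr with w
        exact enorm_indicator_le_enorm_self g w
    _ = _ := by
        push_cast
        rw [ENNReal.ofReal]
        ring

end LatticeSum

namespace BergmanSpace

variable {n : ℕ} {p α : ℝ} [Fact (1 ≤ ENNReal.ofReal p)]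

/-- The representative of an element of the Bergman space that is holomorphic in the ball. It is
unique there by `BergmanSpace.eqOn_rep`; its values outside the ball are arbitrary. -/
def rep (G : BergmanSpace n p α) : En n → ℂ := Classical.choose G.2

theorem differentiableOn_rep (G : BergmanSpace n p α) : DifferentiableOn ℂ (rep G) (unitBall n) :=
  (Classical.choose_spec G.2).1

theorem ae_eq_rep (G : BergmanSpace n p α) :
    ((G : Lp ℂ (ENNReal.ofReal p) (wMeas n α)) : En n → ℂ) =ᵐ[wMeas n α] rep G :=
  (Classical.choose_spec G.2).2

theorem eqOn_rep (hα : -1 < α) (G : BergmanSpace n p α) {g : En n → ℂ}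
    (hg : DifferentiableOn ℂ g (unitBall n))
    (h : ((G : Lp ℂ (ENNReal.ofReal p) (wMeas n α)) : En n → ℂ) =ᵐ[wMeas n α] g) :
    Set.EqOn (rep G) g (unitBall n) :=
  eqOn_unitBall_of_ae_eq hα (differentiableOn_rep G).continuousOn hg.continuousOn
    ((ae_eq_rep G).symm.trans h)

theorem rep_add (hα : -1 < α) (G H : BergmanSpace n p α) :
    Set.EqOn (rep (G + H)) (rep G + rep H) (unitBall n) :=
  eqOn_rep hα _ ((differentiableOn_rep G).add (differentiableOn_rep H))
    ((Lp.coeFn_add _ _).trans ((ae_eq_rep G).add (ae_eq_rep H)))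

theorem rep_smul (hα : -1 < α) (c : ℂ) (G : BergmanSpace n p α) :
    Set.EqOn (rep (c • G)) (c • rep G) (unitBall n) :=
  eqOn_rep hα _ ((differentiableOn_rep G).const_smul c)
    ((Lp.coeFn_smul _ _).trans ((ae_eq_rep G).const_smul c))

theorem lintegral_rep (G : BergmanSpace n p α) :
    ∫⁻ z, ‖rep G z‖ₑ ^ p ∂wMeas n α = ‖G‖ₑ ^ p := by
  have hp0 : 0 < p := one_pos.trans_le (ENNReal.one_le_ofReal.1 Fact.out)
  have hnorm : ‖G‖ₑ = eLpNorm (rep G) (ENNReal.ofReal p) (wMeas n α) := by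
    rw [← eLpNorm_congr_ae (ae_eq_rep G), ← Lp.enorm_def]
    rfl
  rw [hnorm, eLpNorm_eq_lintegral_rpow_enorm_toReal (ENNReal.ofReal_pos.2 hp0).ne'
    ENNReal.ofReal_ne_top, ENNReal.toReal_ofReal hp0.le, one_div, ENNReal.rpow_inv_rpow hp0.ne']

end BergmanSpace

section Khinchine

variable {ι E : Type*} [DecidableEq ι]

/-- The sum of `± x k` over `k ∈ s`, the sign being `+` exactly for `k ∈ t`. A Rademacher sum is
the family of all these as `t` runs through the subsets of `s`. -/
def signedSum [AddCommGroup E] (s : Finset ι) (x : ι → E) (t : Finset ι) : E :=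
  ∑ k ∈ s, if k ∈ t then x k else -x k

theorem sum_powerset_insert_signedSum {M : Type*} [AddCommGroup E] [AddCommMonoid M]
    {s : Finset ι} {i : ι} (hi : i ∉ s) (x : ι → E) (F : E → M) :
    ∑ t ∈ (insert i s).powerset, F (signedSum (insert i s) x t) =
      ∑ t ∈ s.powerset, (F (signedSum s x t + x i) + F (signedSum s x t - x i)) := by
  rw [Finset.sum_powerset_insert hi, add_comm, Finset.sum_add_distrib]
  congr 1 <;> refine Finset.sum_congr rfl fun t ht => ?_
  · have hs : ∀ k ∈ s, (k ∈ insert i t ↔ k ∈ t) := fun k hk => by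
      simp only [Finset.mem_insert, or_iff_right (ne_of_mem_of_not_mem hk hi)]
    simp only [signedSum, Finset.sum_insert hi, Finset.mem_insert_self, if_true]
    rw [add_comm, Finset.sum_congr rfl fun k hk => if_congr (hs k hk) rfl rfl]
  · have hit : i ∉ t := fun h => hi (Finset.mem_powerset.1 ht h)
    simp only [signedSum, Finset.sum_insert hi, hit, if_false, neg_add_eq_sub]

variable [NormedAddCommGroup E] [InnerProductSpace ℝ E]

theorem sum_norm_signedSum_sq (s : Finset ι) (x : ι → E) :
    ∑ t ∈ s.powerset, ‖signedSum s x t‖ ^ 2 = 2 ^ s.card * ∑ k ∈ s, ‖x k‖ ^ 2 := by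
  induction s using Finset.induction_on with
  | empty => simp [signedSum]
  | insert i s hi ih =>
    have hpar (y : E) : ‖y + x i‖ ^ 2 + ‖y - x i‖ ^ 2 = 2 * ‖y‖ ^ 2 + 2 * ‖x i‖ ^ 2 := by
      linarith [parallelogram_law_with_norm ℝ y (x i)]
    rw [sum_powerset_insert_signedSum hi x fun y => ‖y‖ ^ 2, Finset.sum_insert hi,
      Finset.card_insert_of_notMem hi, Finset.sum_congr rfl fun t _ => hpar _,
      Finset.sum_add_distrib, ← Finset.mul_sum, ih, Finset.sum_const, Finset.card_powerset,
      nsmul_eq_mul]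
    push_cast
    ring

theorem norm_add_pow_four_add_norm_sub_pow_four_le (x y : E) :
    ‖x + y‖ ^ 4 + ‖x - y‖ ^ 4 ≤ 2 * ‖x‖ ^ 4 + 12 * ‖y‖ ^ 2 * ‖x‖ ^ 2 + 2 * ‖y‖ ^ 4 := by
  have hcs : ⟪x, y⟫_ℝ ^ 2 ≤ (‖x‖ * ‖y‖) ^ 2 := sq_le_sq.2 <| by
    rw [abs_of_nonneg (mul_nonneg (norm_nonneg x) (norm_nonneg y))]
    exact abs_real_inner_le_norm x y
  calc ‖x + y‖ ^ 4 + ‖x - y‖ ^ 4 = (‖x + y‖ ^ 2) ^ 2 + (‖x - y‖ ^ 2) ^ 2 := by ring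
    _ = 2 * (‖x‖ ^ 2 + ‖y‖ ^ 2) ^ 2 + 8 * ⟪x, y⟫_ℝ ^ 2 := by
      rw [norm_add_sq_real, norm_sub_sq_real]; ring
    _ ≤ 2 * (‖x‖ ^ 2 + ‖y‖ ^ 2) ^ 2 + 8 * (‖x‖ * ‖y‖) ^ 2 := by gcongr
    _ = _ := by ring

theorem sum_norm_signedSum_pow_four_le (s : Finset ι) (x : ι → E) :
    ∑ t ∈ s.powerset, ‖signedSum s x t‖ ^ 4 ≤ 2 ^ s.card * (3 * (∑ k ∈ s, ‖x k‖ ^ 2) ^ 2) := by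
  induction s using Finset.induction_on with
  | empty => simp [signedSum]
  | insert i s hi ih =>
    rw [sum_powerset_insert_signedSum hi x fun y => ‖y‖ ^ 4, Finset.sum_insert hi,
      Finset.card_insert_of_notMem hi]
    refine (Finset.sum_le_sum fun t _ => norm_add_pow_four_add_norm_sub_pow_four_le _ _).trans ?_
    rw [Finset.sum_add_distrib, Finset.sum_add_distrib, ← Finset.mul_sum, ← Finset.mul_sum,
      sum_norm_signedSum_sq, Finset.sum_const, Finset.card_powerset, nsmul_eq_mul]
    push_cast
    have : (0 : ℝ) ≤ 2 ^ s.card * ‖x i‖ ^ 4 := by positivity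
    linear_combination 2 * ih + 4 * this

-- Littlewood's argument: the fourth moment controls the second one from the first, through
-- `0 ≤ y (y - 2σ)² (y + 4σ)`.
theorem sqrt_sum_norm_sq_le_sum_norm_signedSum (s : Finset ι) (x : ι → E) :
    2 ^ s.card * √(∑ k ∈ s, ‖x k‖ ^ 2) ≤ 2 * ∑ t ∈ s.powerset, ‖signedSum s x t‖ := by
  set σ := √(∑ k ∈ s, ‖x k‖ ^ 2)
  have hσ2 : ∑ k ∈ s, ‖x k‖ ^ 2 = σ ^ 2 := (Real.sq_sqrt (by positivity)).symm
  rcases (show 0 ≤ σ from Real.sqrt_nonneg _).eq_or_lt with hσ | hσ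
  · rw [← hσ, mul_zero]
    positivity
  have hpoint (y : ℝ) (hy : 0 ≤ y) : 12 * σ ^ 2 * y ^ 2 ≤ 16 * σ ^ 3 * y + y ^ 4 := by
    have : 0 ≤ y * (y - 2 * σ) ^ 2 * (y + 4 * σ) := by positivity
    linarith
  have hsum := Finset.sum_le_sum fun t (_ : t ∈ s.powerset) =>
    hpoint ‖signedSum s x t‖ (norm_nonneg _)
  have hfour := sum_norm_signedSum_pow_four_le s x
  rw [Finset.sum_add_distrib, ← Finset.mul_sum, ← Finset.mul_sum, sum_norm_signedSum_sq,
    hσ2] at hsum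
  rw [hσ2] at hfour
  have hfirst : 0 ≤ σ ^ 3 * ∑ t ∈ s.powerset, ‖signedSum s x t‖ := by positivity
  refine le_of_mul_le_mul_left ?_ (pow_pos hσ 3)
  linarith [show (0 : ℝ) ≤ 2 ^ s.card * σ ^ 4 by positivity]

theorem two_pow_mul_rpow_sum_enorm_sq_le (s : Finset ι) (x : ι → E) :
    2 ^ s.card * (∑ k ∈ s, ‖x k‖ₑ ^ (2 : ℝ)) ^ (1 / (2 : ℝ)) ≤
      2 * ∑ t ∈ s.powerset, ‖signedSum s x t‖ₑ := by
  have h := ENNReal.ofReal_le_ofReal (sqrt_sum_norm_sq_le_sum_norm_signedSum s x)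
  rw [ENNReal.ofReal_mul (by positivity), ENNReal.ofReal_mul zero_le_two, Real.sqrt_eq_rpow,
    ← ENNReal.ofReal_rpow_of_nonneg (by positivity) (by norm_num),
    ENNReal.ofReal_sum_of_nonneg fun _ _ => by positivity,
    ENNReal.ofReal_sum_of_nonneg fun _ _ => norm_nonneg _] at h
  simpa only [ENNReal.ofReal_pow, norm_nonneg, zero_le_two, ofReal_norm, ENNReal.ofReal_ofNat,
    ENNReal.rpow_ofNat] using h

end Khinchine

section Minkowski

theorem rpow_sum_rpow_lintegral_le {Ω ι : Type*} [MeasurableSpace Ω] {ν : Measure Ω} {p : ℝ}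
    (hp : 1 ≤ p) (s : Finset ι) {f : ι → Ω → ℝ≥0∞} (hf : ∀ k ∈ s, AEMeasurable (f k) ν) :
    (∑ k ∈ s, (∫⁻ u, f k u ∂ν) ^ p) ^ (1 / p) ≤ ∫⁻ u, (∑ k ∈ s, f k u ^ p) ^ (1 / p) ∂ν := by
  have hp0 : 0 < p := one_pos.trans_le hp
  rcases hp.eq_or_lt with rfl | hp1
  · simp only [ENNReal.rpow_one, div_one]
    exact (lintegral_finsetSum' _ hf).ge
  have hcoord (k : ι) (hk : k ∈ s) (u : Ω) : f k u ≤ (∑ k ∈ s, f k u ^ p) ^ (1 / p) := by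
    rw [one_div, ENNReal.le_rpow_inv_iff hp0]
    exact Finset.single_le_sum (f := fun k => f k u ^ p) (fun _ _ => zero_le) hk
  set a : ι → ℝ≥0∞ := fun k => ∫⁻ u, f k u ∂ν
  by_cases htop : ∃ k ∈ s, a k = ⊤
  · obtain ⟨k, hk, hak⟩ := htop
    exact le_top.trans (hak.ge.trans (lintegral_mono (hcoord k hk)))
  push Not at htop
  set S := ∑ k ∈ s, a k ^ p
  have hS : S ≠ ⊤ := ENNReal.sum_ne_top.2 fun k hk =>
    ENNReal.rpow_ne_top_of_nonneg hp0.le (htop k hk)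
  rcases eq_or_ne S 0 with hS0 | hS0
  · rw [hS0, ENNReal.zero_rpow_of_pos (by positivity)]
    exact zero_le
  have hconj : p.HolderConjugate (p / (p - 1)) := .conjExponent hp1
  -- duality: test the vector `∫ f k` against `a k ^ (p - 1)`
  have hmul : S ^ (1 / p) * S ^ (1 / (p / (p - 1))) ≤
      S ^ (1 / (p / (p - 1))) * ∫⁻ u, (∑ k ∈ s, f k u ^ p) ^ (1 / p) ∂ν := by
    calc _ = ∑ k ∈ s, ∫⁻ u, a k ^ (p - 1) * f k u ∂ν := by
          rw [← ENNReal.rpow_add _ _ hS0 hS, one_div, one_div, hconj.inv_add_inv_eq_one,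
            ENNReal.rpow_one]
          refine Finset.sum_congr rfl fun k hk => ?_
          have hpow := ENNReal.rpow_add_of_nonneg (x := a k) (p - 1) 1 (by linarith) zero_le_one
          rwa [sub_add_cancel, ENNReal.rpow_one, ← lintegral_const_mul'' _ (hf k hk)] at hpow
      _ = ∫⁻ u, ∑ k ∈ s, a k ^ (p - 1) * f k u ∂ν :=
          (lintegral_finsetSum' _ fun k hk => (hf k hk).const_mul _).symm
      _ ≤ ∫⁻ u, S ^ (1 / (p / (p - 1))) * (∑ k ∈ s, f k u ^ p) ^ (1 / p) ∂ν := by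
          refine lintegral_mono fun u => ?_
          have h := ENNReal.inner_le_Lp_mul_Lq s (fun k => a k ^ (p - 1)) (fun k => f k u)
            hconj.symm
          simpa only [← ENNReal.rpow_mul, hconj.sub_one_mul_conj] using h
      _ = _ := lintegral_const_mul' _ _ (ENNReal.rpow_ne_top_of_nonneg (by
          have := hconj.symm.pos; positivity) hS)
  rw [mul_comm] at hmul
  exact (ENNReal.mul_le_mul_iff_right (ENNReal.rpow_pos hS0.bot_lt hS).ne'
    (ENNReal.rpow_ne_top_of_ne_zero hS0 hS)).1 hmul

end Minkowski

section WeakNorm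

variable {ι X Y : Type*} [Fintype ι] [NormedAddCommGroup X] [NormedSpace ℂ X]

/-- The weak `ℓ^r` norm of a finite family, the right-hand side of the inequality defining
`r`-summing operators. -/
def weakNorm (r : ℝ) (x : ι → X) : ℝ :=
  ⨆ φ : {φ : X →L[ℂ] ℂ // ‖φ‖ ≤ 1}, (∑ k, ‖φ.1 (x k)‖ ^ r) ^ (1 / r)

theorem weakNorm_nonneg (r : ℝ) (x : ι → X) : 0 ≤ weakNorm r x :=
  Real.iSup_nonneg fun _ => by positivity

theorem le_weakNorm {r : ℝ} (hr : 0 ≤ r) (x : ι → X) {φ : X →L[ℂ] ℂ} (hφ : ‖φ‖ ≤ 1) :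
    (∑ k, ‖φ (x k)‖ ^ r) ^ (1 / r) ≤ weakNorm r x := by
  have hbdd : BddAbove (Set.range fun φ : {φ : X →L[ℂ] ℂ // ‖φ‖ ≤ 1} =>
      (∑ k, ‖φ.1 (x k)‖ ^ r) ^ (1 / r)) := by
    refine ⟨(∑ k, ‖x k‖ ^ r) ^ (1 / r), ?_⟩
    rintro _ ⟨ψ, rfl⟩
    dsimp only
    gcongr with k
    exact (ψ.1.le_opNorm (x k)).trans (mul_le_of_le_one_left (norm_nonneg _) ψ.2)
  exact le_ciSup hbdd ⟨φ, hφ⟩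

theorem sum_norm_rpow_le_weakNorm {r : ℝ} (hr : 0 < r) (f : X →L[ℂ] ℂ) (x : ι → X) :
    ∑ k, ‖f (x k)‖ ^ r ≤ (‖f‖ * weakNorm r x) ^ r := by
  rcases (norm_nonneg f).eq_or_lt with hf | hf
  · simp [norm_eq_zero.1 hf.symm, Real.zero_rpow hr.ne']
  have hnormalized : ‖(‖f‖ : ℂ)⁻¹ • f‖ ≤ 1 := by
    rw [norm_smul, norm_inv, norm_real, norm_norm, inv_mul_cancel₀ hf.ne']
  have hweak := le_weakNorm hr.le x hnormalized
  rw [one_div, Real.rpow_inv_le_iff_of_pos (by positivity) (weakNorm_nonneg r x) hr] at hweak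
  rw [Real.mul_rpow hf.le (weakNorm_nonneg r x)]
  refine le_trans (le_of_eq ?_) (mul_le_mul_of_nonneg_left hweak (Real.rpow_nonneg hf.le r))
  rw [Finset.mul_sum]
  refine Finset.sum_congr rfl fun k _ => ?_
  rw [← Real.mul_rpow hf.le (norm_nonneg _), smul_apply, norm_smul, norm_inv, norm_real,
    norm_norm, mul_inv_cancel_left₀ hf.ne']

theorem sum_enorm_rpow_le_weakNorm {r : ℝ} (hr : 0 < r) (f : X →L[ℂ] ℂ) (x : ι → X) :
    ∑ k, ‖f (x k)‖ₑ ^ r ≤ (‖f‖ₑ * ENNReal.ofReal (weakNorm r x)) ^ r := by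
  have h := ENNReal.ofReal_le_ofReal (sum_norm_rpow_le_weakNorm hr f x)
  rw [ENNReal.ofReal_sum_of_nonneg fun _ _ => by positivity,
    ← ENNReal.ofReal_rpow_of_nonneg (mul_nonneg (norm_nonneg f) (weakNorm_nonneg r x)) hr.le,
    ENNReal.ofReal_mul (norm_nonneg f), ofReal_norm] at h
  simpa only [← ENNReal.ofReal_rpow_of_nonneg, norm_nonneg, hr.le, ofReal_norm] using h

theorem weakNorm_smul_le {r s t : ℝ} (h : t.HolderTriple r s) (l : ι → ℂ) (x : ι → X) :
    weakNorm s (fun k => l k • x k) ≤ (∑ k, ‖l k‖ ^ t) ^ (1 / t) * weakNorm r x := by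
  have : Nonempty {φ : X →L[ℂ] ℂ // ‖φ‖ ≤ 1} := ⟨0, by simp⟩
  refine ciSup_le fun φ => ?_
  have hle := Real.Lr_rpow_le_Lp_mul_Lq Finset.univ (fun k => ‖l k‖) (fun k => ‖φ.1 (x k)‖) h
  calc (∑ k, ‖φ.1 (l k • x k)‖ ^ s) ^ (1 / s)
      ≤ ((∑ k, ‖l k‖ ^ t) ^ (s / t) * (∑ k, ‖φ.1 (x k)‖ ^ r) ^ (s / r)) ^ (1 / s) := by
        gcongr
        · exact h.one_div_nonneg'
        · simpa only [map_smul, norm_smul, abs_mul, abs_norm] using hle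
    _ = (∑ k, ‖l k‖ ^ t) ^ (1 / t) * (∑ k, ‖φ.1 (x k)‖ ^ r) ^ (1 / r) := by
        rw [Real.mul_rpow (by positivity) (by positivity), ← Real.rpow_mul (by positivity),
          ← Real.rpow_mul (by positivity), div_mul_div_comm, div_mul_div_comm, mul_one,
          div_mul_cancel_right₀ h.ne_zero', div_mul_cancel_right₀ h.ne_zero', one_div, one_div]
    _ ≤ _ := by
        gcongr
        exact le_weakNorm h.symm.nonneg x φ.2

variable [NormedAddCommGroup Y] [NormedSpace ℂ Y]

theorem SummingBoundWith.mono_exponent {s r C : ℝ} (hs : 0 < s) (hsr : s ≤ r) {T : X →ₗ[ℂ] Y}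
    (hC : 0 ≤ C) (h : SummingBoundWith s s T C) : SummingBoundWith r r T C := by
  rcases hsr.eq_or_lt with rfl | hlt
  · exact h
  intro m x
  have hr : 0 < r := hs.trans hlt
  have htriple : ((s⁻¹ - r⁻¹)⁻¹).HolderTriple r s :=
    ⟨by rw [inv_inv]; ring, inv_pos.2 (sub_pos.2 (inv_strictAnti₀ hs hlt)), hr⟩
  set t := (s⁻¹ - r⁻¹)⁻¹
  have ht : 0 < t := htriple.pos
  set A := ∑ k, ‖T (x k)‖ ^ r
  rcases (show 0 ≤ A by positivity).eq_or_lt with hA | hA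
  · rw [← hA, Real.zero_rpow (by positivity)]
    exact mul_nonneg hC (weakNorm_nonneg r x)
  set l : Fin m → ℂ := fun k => ((‖T (x k)‖ ^ (r / t) : ℝ) : ℂ)
  have hl (k : Fin m) : ‖l k‖ = ‖T (x k)‖ ^ (r / t) := by
    rw [norm_real, Real.norm_of_nonneg (by positivity)]
  have hlt (k : Fin m) : ‖l k‖ ^ t = ‖T (x k)‖ ^ r := by
    rw [hl, ← Real.rpow_mul (norm_nonneg _), div_mul_cancel₀ _ ht.ne']
  have hexp : (r / t + 1) * s = r := by
    have hinv : r / t = r * (s⁻¹ - r⁻¹) := div_inv_eq_mul _ _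
    rw [hinv]
    field_simp
    ring
  have hTl (k : Fin m) : ‖T (l k • x k)‖ ^ s = ‖T (x k)‖ ^ r := by
    rw [map_smul, norm_smul, hl, ← Real.rpow_add_one' (norm_nonneg _) (by positivity),
      ← Real.rpow_mul (norm_nonneg _), hexp]
  have hmul : A ^ (1 / t) * A ^ (1 / r) ≤ A ^ (1 / t) * (C * weakNorm r x) := by
    rw [← Real.rpow_add hA, htriple.one_div_add_one_div]
    calc A ^ (1 / s) ≤ C * weakNorm s fun k => l k • x k := by
          have hle := h m fun k => l k • x k
          simp only [hTl] at hle
          exact hle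
      _ ≤ C * ((∑ k, ‖l k‖ ^ t) ^ (1 / t) * weakNorm r x) :=
          mul_le_mul_of_nonneg_left (weakNorm_smul_le htriple l x) hC
      _ = _ := by
          simp only [hlt]
          ring
  exact le_of_mul_le_mul_left hmul (Real.rpow_pos_of_pos hA _)

theorem summingNorm_le_of_le {s r : ℝ} (hs : 0 < s) (hsr : s ≤ r) {T : X →ₗ[ℂ] Y}
    (h : IsSummingRS s s T) : summingNorm r r T ≤ summingNorm s s T :=
  csInf_le_csInf ⟨0, fun _ hC => hC.1⟩ h fun _ hC => ⟨hC.1, hC.2.mono_exponent hs hsr hC.1⟩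

-- Khinchine's inequality linearizes the square function into the functionals `∑ ± φ k`.
theorem sum_rpow_sum_enorm_sq_le_weakNorm {κ : Type*} (s : Finset κ)
    {φ : κ → X →L[ℂ] ℂ} {M : ℝ≥0∞} (hM : ∀ y, ∑ k ∈ s, ‖φ k y‖ₑ ≤ M * ‖y‖ₑ) (x : ι → X) :
    ∑ j, (∑ k ∈ s, ‖φ k (x j)‖ₑ ^ (2 : ℝ)) ^ (1 / (2 : ℝ)) ≤
      2 * M * ENNReal.ofReal (weakNorm 1 x) := by
  classical
  have hsigned (t : Finset κ) : ∑ j, ‖signedSum s (fun k => φ k (x j)) t‖ₑ ≤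
      M * ENNReal.ofReal (weakNorm 1 x) := by
    have happly (y : X) : signedSum s (fun k => φ k y) t = signedSum s φ t y := by
      simp only [signedSum, sum_apply]
      exact Finset.sum_congr rfl fun k _ => by split_ifs <;> rfl
    have hnorm : ‖signedSum s φ t‖ₑ ≤ M := by
      refine ContinuousLinearMap.opENorm_le_bound _ fun y => ?_
      rw [← happly]
      refine ((enorm_sum_le _ _).trans_eq (Finset.sum_congr rfl fun k _ => ?_)).trans (hM y)
      split_ifs
      · rfl
      · exact enorm_neg _
    have hweak := sum_enorm_rpow_le_weakNorm one_pos (signedSum s φ t) x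
    simp only [ENNReal.rpow_one, ← happly] at hweak
    exact hweak.trans (mul_le_mul_left hnorm _)
  refine (ENNReal.mul_le_mul_iff_right (a := 2 ^ s.card) (by positivity) (by finiteness)).1 ?_
  calc 2 ^ s.card * ∑ j, (∑ k ∈ s, ‖φ k (x j)‖ₑ ^ (2 : ℝ)) ^ (1 / (2 : ℝ))
      ≤ ∑ j, 2 * ∑ t ∈ s.powerset, ‖signedSum s (fun k => φ k (x j)) t‖ₑ := by
        rw [Finset.mul_sum]
        exact Finset.sum_le_sum fun j _ => two_pow_mul_rpow_sum_enorm_sq_le s _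
    _ = 2 * ∑ t ∈ s.powerset, ∑ j, ‖signedSum s (fun k => φ k (x j)) t‖ₑ := by
        rw [← Finset.mul_sum, Finset.sum_comm]
    _ ≤ 2 * ∑ _t ∈ s.powerset, M * ENNReal.ofReal (weakNorm 1 x) := by
        gcongr
        exact hsigned _
    _ = _ := by
        rw [Finset.sum_const, Finset.card_powerset, nsmul_eq_mul]
        push_cast
        ring

end WeakNorm

section SequenceSpaces

theorem ellNormE'_rpow {s : ℝ} (hs : 0 < s) (x : ℕ → ℝ≥0∞) :
    ellNormE' s x ^ s = ∑' k, x k ^ s := by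
  rw [ellNormE', one_div, ENNReal.rpow_inv_rpow hs.ne']

theorem ellNormE'_le_iff {s : ℝ} (hs : 0 < s) {x : ℕ → ℝ≥0∞} {B : ℝ≥0∞} :
    ellNormE' s x ≤ B ↔ ∑' k, x k ^ s ≤ B ^ s := by
  rw [ellNormE', one_div, ENNReal.rpow_inv_le_iff hs]

theorem tendsto_rpow_sum_rpow_ellNormE' (s : ℝ) (x : ℕ → ℝ≥0∞) :
    Tendsto (fun K : Finset ℕ => (∑ k ∈ K, x k ^ s) ^ (1 / s)) atTop (nhds (ellNormE' s x)) :=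
  (ENNReal.continuous_rpow_const.tendsto _).comp ENNReal.summable.hasSum

theorem rpow_sum_rpow_le_ellNormE' {s : ℝ} (hs : 0 < s) (x : ℕ → ℝ≥0∞) (K : Finset ℕ) :
    (∑ k ∈ K, x k ^ s) ^ (1 / s) ≤ ellNormE' s x :=
  ENNReal.rpow_le_rpow (ENNReal.sum_le_tsum K) (by positivity)

theorem le_ellNormE' {s : ℝ} (hs : 0 < s) (x : ℕ → ℝ≥0∞) (k : ℕ) : x k ≤ ellNormE' s x := by
  rw [← ENNReal.rpow_le_rpow_iff hs, ellNormE'_rpow hs]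
  exact ENNReal.le_tsum k

theorem ellNormE'_anti {s t : ℝ} (hs : 0 < s) (hst : s ≤ t) (x : ℕ → ℝ≥0∞) :
    ellNormE' t x ≤ ellNormE' s x := by
  have hst' : 0 ≤ t - s := sub_nonneg.2 hst
  set S := ellNormE' s x
  rw [ellNormE'_le_iff (hs.trans_le hst)]
  calc ∑' k, x k ^ t = ∑' k, x k ^ s * x k ^ (t - s) := by
        simp only [← ENNReal.rpow_add_of_nonneg _ _ hs.le hst', add_sub_cancel]
    _ ≤ ∑' k, x k ^ s * S ^ (t - s) := by
        gcongr with k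
        exact le_ellNormE' hs x k
    _ = S ^ t := by
        rw [ENNReal.tsum_mul_right, ← ellNormE'_rpow hs,
          ← ENNReal.rpow_add_of_nonneg _ _ hs.le hst', add_sub_cancel]

theorem ellNormE'_const_mul {s : ℝ} (hs : 0 < s) (c : ℝ≥0∞) (x : ℕ → ℝ≥0∞) :
    ellNormE' s (fun k => c * x k) = c * ellNormE' s x := by
  simp only [ellNormE', ENNReal.mul_rpow_of_nonneg _ _ hs.le]
  rw [ENNReal.tsum_mul_left, ENNReal.mul_rpow_of_nonneg _ _ (by positivity), one_div,
    ENNReal.rpow_rpow_inv hs.ne']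

theorem ellNormE'_rpow_comp {c : ℝ} (hc : c ≠ 0) (s : ℝ) (x : ℕ → ℝ≥0∞) :
    ellNormE' s (fun k => x k ^ c) = ellNormE' (c * s) x ^ c := by
  simp only [ellNormE', ← ENNReal.rpow_mul]
  rw [one_div_mul_eq_div, div_mul_cancel_left₀ hc, one_div]

theorem sum_ellNormE'_mul_rpow_le {ι : Type*} [Fintype ι] {q r : ℝ} (hr : 0 < r) (hrq : r ≤ q)
    {b : ℕ → ℝ≥0∞} {f : ι → ℕ → ℝ≥0∞} {M : ℝ≥0∞} (hM : ∀ k, ∑ j, f j k ^ r ≤ M ^ r) :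
    ∑ j, ellNormE' q (fun k => b k * f j k) ^ r ≤ (ellNormE' r b * M) ^ r :=
  calc ∑ j, ellNormE' q (fun k => b k * f j k) ^ r
      ≤ ∑ j, ellNormE' r (fun k => b k * f j k) ^ r := by
        gcongr
        exact ellNormE'_anti hr hrq _
    _ = ∑' k, b k ^ r * ∑ j, f j k ^ r := by
        simp only [ellNormE'_rpow hr, ENNReal.mul_rpow_of_nonneg _ _ hr.le, Finset.mul_sum]
        exact (Summable.tsum_finsetSum fun _ _ => ENNReal.summable).symm
    _ ≤ ∑' k, b k ^ r * M ^ r := by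
        gcongr with k
        exact hM k
    _ = (ellNormE' r b * M) ^ r := by
        rw [ENNReal.tsum_mul_right, ← ellNormE'_rpow hr, ENNReal.mul_rpow_of_nonneg _ _ hr.le]

theorem tsum_mul_le_ellNormE'_mul {s t : ℝ} (hst : s.HolderConjugate t) (x y : ℕ → ℝ≥0∞) :
    ∑' k, x k * y k ≤ ellNormE' s x * ellNormE' t y := by
  have h := ENNReal.lintegral_mul_le_Lp_mul_Lq Measure.count hst (f := x) (g := y)
    (measurable_of_countable x).aemeasurable (measurable_of_countable y).aemeasurable
  simpa only [ellNormE', lintegral_count, Pi.mul_apply] using h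

theorem ellNormE'_mul_le {s t u : ℝ} (h : s.HolderTriple t u) (x y : ℕ → ℝ≥0∞) :
    ellNormE' u (fun k => x k * y k) ≤ ellNormE' s x * ellNormE' t y := by
  have h := ENNReal.lintegral_Lp_mul_le_Lq_mul_Lr h.pos' h.lt h.one_div_add_one_div.symm
    Measure.count (f := x) (g := y) (measurable_of_countable x).aemeasurable
    (measurable_of_countable y).aemeasurable
  simpa only [ellNormE', lintegral_count, Pi.mul_apply] using h

theorem ellNormE'_lintegral_le {Ω : Type*} [MeasurableSpace Ω] {ν : Measure Ω} {p : ℝ}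
    (hp : 1 ≤ p) {f : ℕ → Ω → ℝ≥0∞} (hf : ∀ k, AEMeasurable (f k) ν) :
    ellNormE' p (fun k => ∫⁻ u, f k u ∂ν) ≤ ∫⁻ u, ellNormE' p (fun k => f k u) ∂ν :=
  le_of_tendsto' (tendsto_rpow_sum_rpow_ellNormE' p _) fun K =>
    (rpow_sum_rpow_lintegral_le hp K fun k _ => hf k).trans <|
      lintegral_mono fun _ => rpow_sum_rpow_le_ellNormE' (one_pos.trans_le hp) _ K

theorem sum_ellNormE'_two_le_weakNorm {ι X : Type*} [Fintype ι] [NormedAddCommGroup X]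
    [NormedSpace ℂ X] {φ : ℕ → X →L[ℂ] ℂ} {M : ℝ≥0∞} (hM : ∀ y, ∑' k, ‖φ k y‖ₑ ≤ M * ‖y‖ₑ)
    (x : ι → X) :
    ∑ j, ellNormE' 2 (fun k => ‖φ k (x j)‖ₑ) ≤ 2 * M * ENNReal.ofReal (weakNorm 1 x) :=
  le_of_tendsto' (tendsto_finsetSum _ fun _ _ => tendsto_rpow_sum_rpow_ellNormE' 2 _) fun K =>
    sum_rpow_sum_enorm_sq_le_weakNorm K (fun y => (ENNReal.sum_le_tsum K).trans (hM y)) x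

/-- `γ` acts on `ℓ^p` as a functional of norm at most `Γ`. In terms of the conjugate exponent `p'`
this says `‖γ‖_{p'} ≤ Γ`, uniformly in the cases `p = 1` and `1 < p`. -/
def IsEllDualBound (p : ℝ) (γ : ℕ → ℝ≥0∞) (Γ : ℝ≥0∞) : Prop :=
  ∀ y : ℕ → ℝ≥0∞, ∑' k, γ k * y k ≤ Γ * ellNormE' p y

theorem isEllDualBound_ellNormE' {p p' : ℝ} (h : p'.HolderConjugate p) (γ : ℕ → ℝ≥0∞) :
    IsEllDualBound p γ (ellNormE' p' γ) :=
  tsum_mul_le_ellNormE'_mul h γ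

theorem isEllDualBound_one_iSup (γ : ℕ → ℝ≥0∞) : IsEllDualBound 1 γ (⨆ k, γ k) := fun y => by
  simp only [ellNormE', ENNReal.rpow_one, div_one, ← ENNReal.tsum_mul_left]
  gcongr with k
  exact le_iSup γ k

theorem IsEllDualBound.apply_le {p : ℝ} (hp : 0 < p) {γ : ℕ → ℝ≥0∞} {Γ : ℝ≥0∞}
    (h : IsEllDualBound p γ Γ) (k : ℕ) : γ k ≤ Γ := by
  have hk := h (Pi.single k 1)
  rw [ellNormE', tsum_eq_single k, tsum_eq_single k] at hk
  · simpa using hk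
  · intro i hi
    simp [Pi.single_eq_of_ne hi, hp]
  · intro i hi
    simp [Pi.single_eq_of_ne hi]

theorem isEllDualBound_rpow {p s : ℝ} (hp : 1 ≤ p) (hs : 0 < s) (b : ℕ → ℝ≥0∞) :
    IsEllDualBound p (fun k => b k ^ (s * (1 - p⁻¹))) (ellNormE' s b ^ (s * (1 - p⁻¹))) := by
  rcases hp.eq_or_lt with rfl | hp1
  · simpa using isEllDualBound_one_iSup fun _ => 1
  · have hconj := (Real.HolderConjugate.conjExponent hp1).symm
    have hpos : 0 < 1 - p⁻¹ := sub_pos.2 (inv_lt_one_of_one_lt₀ hp1)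
    have hexp : s * (1 - p⁻¹) * (p / (p - 1)) = s := by
      have : p - 1 ≠ 0 := (sub_pos.2 hp1).ne'
      field_simp
    have hdual := isEllDualBound_ellNormE' hconj fun k => b k ^ (s * (1 - p⁻¹))
    rwa [ellNormE'_rpow_comp (by positivity), Real.conjExponent, hexp] at hdual

-- Write `b = b ^ (s / t) * b ^ (s * c)`; the first factor has `ℓ^t` norm `‖b‖_s ^ (s / t)`.
theorem ellNormE'_mul_le_rpow_mul {q s t u c : ℝ} (h : t.HolderTriple u q) (hs : 0 < s)
    (hc : 0 ≤ c) (hst : t⁻¹ + c = s⁻¹) (b y : ℕ → ℝ≥0∞) :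
    ellNormE' q (fun k => b k * y k) ≤
      ellNormE' s b ^ (s / t) * ellNormE' u (fun k => b k ^ (s * c) * y k) := by
  have ht := h.pos
  have hsum : s / t + s * c = 1 := by rw [div_eq_mul_inv, ← mul_add, hst, mul_inv_cancel₀ hs.ne']
  have hsplit (k : ℕ) : b k * y k = b k ^ (s / t) * (b k ^ (s * c) * y k) := by
    rw [← mul_assoc, ← ENNReal.rpow_add_of_nonneg _ _ (by positivity) (by positivity), hsum,
      ENNReal.rpow_one]
  have hnorm : ellNormE' t (fun k => b k ^ (s / t)) = ellNormE' s b ^ (s / t) := by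
    rw [ellNormE'_rpow_comp (by positivity), div_mul_cancel₀ s ht.ne']
  simp only [hsplit, ← hnorm]
  exact ellNormE'_mul_le h _ _

/-- The estimate `‖b y‖_q ≤ Θ ‖γ y‖₂` for some `γ` of norm at most `Γ` in the dual of `ℓ^p`, where
`Θ Γ = S`. It passes from weights in `ℓ^q` to square functions, the only sums over the lattice that
Khinchine's inequality controls. -/
def IsSquareFunctionBound (p q : ℝ) (b : ℕ → ℝ≥0∞) (S : ℝ≥0∞) : Prop :=
  ∃ (γ : ℕ → ℝ≥0∞) (Γ Θ : ℝ≥0∞), Γ ≠ ⊤ ∧ IsEllDualBound p γ Γ ∧ Θ * Γ = S ∧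
    ∀ y : ℕ → ℝ≥0∞, ellNormE' q (fun k => b k * y k) ≤ Θ * ellNormE' 2 fun k => γ k * y k

theorem IsEllDualBound.isSquareFunctionBound {p q : ℝ} (hq : 2 ≤ q) {b : ℕ → ℝ≥0∞} {S : ℝ≥0∞}
    (hS : S ≠ ⊤) (h : IsEllDualBound p b S) : IsSquareFunctionBound p q b S :=
  ⟨b, S, 1, hS, h, one_mul S, fun y => by simpa using ellNormE'_anti two_pos hq _⟩

theorem isSquareFunctionBound_of_lt_two {p q : ℝ} (hp : 1 ≤ p) (hq : 0 < q) (hq2 : q < 2)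
    {b : ℕ → ℝ≥0∞} (hb : ellNormE' (2 * p * q / (2 * p - 2 * q + p * q)) b ≠ ⊤) :
    IsSquareFunctionBound p q b (ellNormE' (2 * p * q / (2 * p - 2 * q + p * q)) b) := by
  have hp0 : 0 < p := one_pos.trans_le hp
  have hden : 0 < 2 * p - 2 * q + p * q := by nlinarith
  have hq2' : 0 < 2 - q := sub_pos.2 hq2
  set s := 2 * p * q / (2 * p - 2 * q + p * q) with hs
  have hs0 : 0 < s := by positivity
  have hc : 0 ≤ 1 - p⁻¹ := sub_nonneg.2 (inv_le_one_of_one_le₀ hp)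
  have htriple : (2 * q / (2 - q)).HolderTriple 2 q :=
    ⟨by field_simp; ring, by positivity, two_pos⟩
  have hexp : (2 * q / (2 - q))⁻¹ + (1 - p⁻¹) = s⁻¹ := by
    rw [hs]
    field_simp
    ring
  have hsum : s / (2 * q / (2 - q)) + s * (1 - p⁻¹) = 1 := by
    rw [div_eq_mul_inv, ← mul_add, hexp, mul_inv_cancel₀ hs0.ne']
  refine ⟨fun k => b k ^ (s * (1 - p⁻¹)), ellNormE' s b ^ (s * (1 - p⁻¹)),
    ellNormE' s b ^ (s / (2 * q / (2 - q))), ENNReal.rpow_ne_top_of_nonneg (by positivity) hb,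
    isEllDualBound_rpow hp hs0 b, ?_, ellNormE'_mul_le_rpow_mul htriple hs0 hc hexp b⟩
  rw [← ENNReal.rpow_add_of_nonneg _ _ (by positivity) (by positivity), hsum, ENNReal.rpow_one]

end SequenceSpaces

section LocalMean

variable {n : ℕ} {p α : ℝ} [Fact (1 ≤ ENNReal.ofReal p)] {z u : En n}

theorem BergmanSpace.exists_enorm_rep_le (p : ℝ) [Fact (1 ≤ ENNReal.ofReal p)] (hα : -1 < α)
    (hz : ‖z‖ < 1) : ∃ C : ℝ≥0, ∀ G : BergmanSpace n p α, ‖rep G z‖ₑ ≤ C * ‖G‖ₑ := by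
  have hp : 1 ≤ p := ENNReal.one_le_ofReal.1 Fact.out
  have hs := one_sub_norm_sq_pos hz
  obtain ⟨C, hC⟩ := exists_rpow_mul_enorm_le n hα hp
  set w := ENNReal.ofReal ((1 - ‖z‖ ^ 2) ^ ((n : ℝ) + 1 + α))
  have hw0 : w ≠ 0 := (ENNReal.ofReal_pos.2 (by positivity)).ne'
  have htop : (w⁻¹ * C) ^ (1 / p) ≠ ⊤ := by finiteness
  refine ⟨((w⁻¹ * C) ^ (1 / p)).toNNReal, fun G => ?_⟩
  rw [ENNReal.coe_toNNReal htop, ← ENNReal.rpow_le_rpow_iff (one_pos.trans_le hp),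
    ENNReal.mul_rpow_of_nonneg _ _ (by positivity), one_div,
    ENNReal.rpow_inv_rpow (by positivity), ← lintegral_rep, mul_assoc,
    ← ENNReal.mul_le_iff_le_inv hw0 ENNReal.ofReal_ne_top]
  calc w * ‖rep G z‖ₑ ^ p ≤ C * ∫⁻ w in bergmanEllipsoid z, ‖rep G w‖ₑ ^ p ∂wMeas n α :=
        hC _ (differentiableOn_rep G) z hz
    _ ≤ C * ∫⁻ w, ‖rep G w‖ₑ ^ p ∂wMeas n α := by
        gcongr
        exact Measure.restrict_le_self

/-- Evaluation of the holomorphic representative at a point of the ball. -/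
def BergmanSpace.evalCLM (hα : -1 < α) (hz : ‖z‖ < 1) : BergmanSpace n p α →L[ℂ] ℂ :=
  LinearMap.mkContinuousOfExistsBound
    { toFun := fun G => rep G z
      map_add' := fun G H => rep_add hα G H (mem_unitBall.2 hz)
      map_smul' := fun c G => rep_smul hα c G (mem_unitBall.2 hz) }
    (let ⟨C, hC⟩ := exists_enorm_rep_le p hα hz
    ⟨C, fun G => NNReal.coe_le_coe.2 <| ENNReal.coe_le_coe.1 <|
      show (‖rep G z‖₊ : ℝ≥0∞) ≤ (C * ‖G‖₊ : ℝ≥0) from hC G⟩)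

/-- The function `u ↦ (1 - |z|²)^((n+1+α)/p) G(φ_z(u))`, which transports the behaviour of `G`
near `z` to the origin. The weight is the reciprocal of the order of growth of the norm of the
evaluation at `z`. -/
def mobiusPullback (z : En n) (G : BergmanSpace n p α) (u : En n) : ℂ :=
  (1 - ‖z‖ ^ 2) ^ (((n : ℝ) + 1 + α) / p) • BergmanSpace.rep G (mobius z u)

theorem differentiableOn_mobiusPullback (hz : ‖z‖ < 1) (G : BergmanSpace n p α) :
    DifferentiableOn ℂ (mobiusPullback z G) (unitBall n) :=
  ((BergmanSpace.differentiableOn_rep G).comp (differentiableOn_mobius hz)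
    (mapsTo_mobius hz)).const_smul ((1 - ‖z‖ ^ 2) ^ (((n : ℝ) + 1 + α) / p))

theorem enorm_mobiusPullback (hz : ‖z‖ < 1) (G : BergmanSpace n p α) (u : En n) :
    ‖mobiusPullback z G u‖ₑ = ENNReal.ofReal ((1 - ‖z‖ ^ 2) ^ (((n : ℝ) + 1 + α) / p)) *
      ‖BergmanSpace.rep G (mobius z u)‖ₑ := by
  have hs := one_sub_norm_sq_pos hz
  rw [mobiusPullback, enorm_smul, Real.enorm_of_nonneg (by positivity)]

theorem exists_continuousLinearMap_eq_mobiusPullback (p : ℝ) [Fact (1 ≤ ENNReal.ofReal p)]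
    (hα : -1 < α) (hz : ‖z‖ < 1) (hu : ‖u‖ < 1) :
    ∃ φ : BergmanSpace n p α →L[ℂ] ℂ, ∀ G, φ G = mobiusPullback z G u :=
  ⟨((1 - ‖z‖ ^ 2) ^ (((n : ℝ) + 1 + α) / p) : ℝ) •
    BergmanSpace.evalCLM hα (norm_mobius_lt_one hz hu), fun _ => rfl⟩

theorem IsLattice.exists_ellNormE'_mobiusPullback_le (p : ℝ) [Fact (1 ≤ ENNReal.ofReal p)]
    {a : ℕ → En n} {δ R : ℝ} (ha : IsLattice a δ) (hδ : 0 < δ) (hα : -1 < α) (hR0 : 0 ≤ R)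
    (hR : R < 1) :
    ∃ C : ℝ≥0, ∀ u : En n, ‖u‖ ≤ R → ∀ G : BergmanSpace n p α,
      ellNormE' p (fun k => ‖mobiusPullback (a k) G u‖ₑ) ≤ C * ‖G‖ₑ := by
  have hp : 1 ≤ p := ENNReal.one_le_ofReal.1 Fact.out
  have hp0 : 0 < p := one_pos.trans_le hp
  have hR2 : 0 < 1 - R ^ 2 := by nlinarith
  obtain ⟨C, hC⟩ := ha.exists_tsum_rpow_mul_enorm_le hδ hα hp (one_div_pos.2 hR2)
  have htop : (C : ℝ≥0∞) ^ (1 / p) ≠ ⊤ := by finiteness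
  refine ⟨((C : ℝ≥0∞) ^ (1 / p)).toNNReal, fun u hu G => ?_⟩
  have hz (k : ℕ) := norm_mobius_lt_one (ha.norm_lt_one k) (hu.trans_lt hR)
  have hclose (k : ℕ) : BergmanClose (1 / (1 - R ^ 2)) (a k) (mobius (a k) u) :=
    (BergmanClose.mobius (ha.norm_lt_one k) (hu.trans_lt hR)).mono (ha.norm_lt_one k) (hz k)
      (by gcongr)
  have hpow (k : ℕ) : ‖mobiusPullback (a k) G u‖ₑ ^ p =
      ENNReal.ofReal ((1 - ‖a k‖ ^ 2) ^ ((n : ℝ) + 1 + α)) *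
        ‖BergmanSpace.rep G (mobius (a k) u)‖ₑ ^ p := by
    have hs := one_sub_norm_sq_pos (ha.norm_lt_one k)
    rw [enorm_mobiusPullback (ha.norm_lt_one k), ENNReal.mul_rpow_of_nonneg _ _ hp0.le,
      ENNReal.ofReal_rpow_of_pos (by positivity), ← Real.rpow_mul hs.le,
      div_mul_cancel₀ _ hp0.ne']
  rw [ENNReal.coe_toNNReal htop, ellNormE'_le_iff hp0, ENNReal.mul_rpow_of_nonneg _ _ hp0.le,
    one_div, ENNReal.rpow_inv_rpow hp0.ne', ← BergmanSpace.lintegral_rep]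
  simpa only [hpow] using hC _ (BergmanSpace.differentiableOn_rep G) _ hz hclose

/-- The `L^ρ` mean, over the ball of radius `R`, of `mobiusPullback z G`. -/
def localMean (ρ R : ℝ) (z : En n) (G : BergmanSpace n p α) : ℝ≥0∞ :=
  (∫⁻ u in ball 0 R, ‖mobiusPullback z G u‖ₑ ^ ρ) ^ (1 / ρ)

theorem aemeasurable_enorm_mobiusPullback (hz : ‖z‖ < 1) (G : BergmanSpace n p α) {R : ℝ}
    (hR : R ≤ 1) :
    AEMeasurable (fun u => ‖mobiusPullback z G u‖ₑ) (volume.restrict (ball 0 R)) :=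
  (((differentiableOn_mobiusPullback hz G).continuousOn.mono
    (ball_subset_ball hR)).aemeasurable measurableSet_ball).enorm

theorem IsLattice.exists_sum_localMean_rpow_le (p : ℝ) [Fact (1 ≤ ENNReal.ofReal p)]
    {a : ℕ → En n} {δ R ρ : ℝ} (ha : IsLattice a δ) (hδ : 0 < δ) (hα : -1 < α) (hR0 : 0 ≤ R)
    (hR : R < 1) (hρ : 0 < ρ) :
    ∃ C : ℝ≥0, ∀ (m : ℕ) (x : Fin m → BergmanSpace n p α) (k : ℕ),
      ∑ j, localMean ρ R (a k) (x j) ^ ρ ≤ (C * ENNReal.ofReal (weakNorm ρ x)) ^ ρ := by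
  have hp0 : 0 < p := one_pos.trans_le (ENNReal.one_le_ofReal.1 Fact.out)
  obtain ⟨C, hC⟩ := ha.exists_ellNormE'_mobiusPullback_le p hδ hα hR0 hR
  set V := volume (ball (0 : En n) R)
  have hV : V ^ (1 / ρ) ≠ ⊤ :=
    ENNReal.rpow_ne_top_of_nonneg (by positivity) measure_ball_lt_top.ne
  refine ⟨C * (V ^ (1 / ρ)).toNNReal, fun m x k => ?_⟩
  have hpoint (u : En n) (hu : u ∈ ball 0 R) : ∑ j, ‖mobiusPullback (a k) (x j) u‖ₑ ^ ρ ≤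
      (C * ENNReal.ofReal (weakNorm ρ x)) ^ ρ := by
    rw [mem_ball_zero_iff] at hu
    obtain ⟨φ, hφ⟩ :=
      exists_continuousLinearMap_eq_mobiusPullback p hα (ha.norm_lt_one k) (hu.trans hR)
    have hφC : ‖φ‖ₑ ≤ C := φ.opENorm_le_bound fun G => by
      rw [hφ]
      exact (le_ellNormE' hp0 (fun k => ‖mobiusPullback (a k) G u‖ₑ) k).trans (hC u hu.le G)
    simp only [← hφ]
    refine (sum_enorm_rpow_le_weakNorm hρ φ x).trans ?_
    gcongr
  calc ∑ j, localMean ρ R (a k) (x j) ^ ρ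
      = ∫⁻ u in ball 0 R, ∑ j, ‖mobiusPullback (a k) (x j) u‖ₑ ^ ρ := by
        rw [lintegral_finsetSum' _ fun j _ =>
          (aemeasurable_enorm_mobiusPullback (ha.norm_lt_one k) (x j) hR.le).pow_const ρ]
        simp only [localMean, one_div, ENNReal.rpow_inv_rpow hρ.ne']
    _ ≤ (C * ENNReal.ofReal (weakNorm ρ x)) ^ ρ * V := by
        rw [← setLIntegral_const]
        exact setLIntegral_mono' measurableSet_ball hpoint
    _ = (↑(C * (V ^ (1 / ρ)).toNNReal) * ENNReal.ofReal (weakNorm ρ x)) ^ ρ := by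
        rw [ENNReal.coe_mul, ENNReal.coe_toNNReal hV, mul_right_comm,
          ENNReal.mul_rpow_of_nonneg _ (V ^ (1 / ρ)) hρ.le, one_div,
          ENNReal.rpow_inv_rpow hρ.ne']

theorem sum_ellNormE'_two_mul_mobiusPullback_le {ι : Type*} [Fintype ι] (hα : -1 < α)
    {a : ℕ → En n} (ha : ∀ k, ‖a k‖ < 1) (hu : ‖u‖ < 1) {C : ℝ≥0∞}
    (hC : ∀ G : BergmanSpace n p α, ellNormE' p (fun k => ‖mobiusPullback (a k) G u‖ₑ) ≤ C * ‖G‖ₑ)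
    {γ : ℕ → ℝ≥0∞} {Γ : ℝ≥0∞} (hΓ : Γ ≠ ⊤) (hγ : IsEllDualBound p γ Γ)
    (x : ι → BergmanSpace n p α) :
    ∑ j, ellNormE' 2 (fun k => γ k * ‖mobiusPullback (a k) (x j) u‖ₑ) ≤
      2 * (Γ * C) * ENNReal.ofReal (weakNorm 1 x) := by
  have hp0 : 0 < p := one_pos.trans_le (ENNReal.one_le_ofReal.1 Fact.out)
  choose φ hφ using fun k => exists_continuousLinearMap_eq_mobiusPullback p hα (ha k) hu
  have happly (k : ℕ) (G : BergmanSpace n p α) :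
      ‖((γ k).toReal • φ k) G‖ₑ = γ k * ‖mobiusPullback (a k) G u‖ₑ := by
    rw [smul_apply, hφ, enorm_smul, Real.enorm_of_nonneg ENNReal.toReal_nonneg,
      ENNReal.ofReal_toReal (ne_top_of_le_ne_top hΓ (hγ.apply_le hp0 k))]
  simp only [← happly]
  refine sum_ellNormE'_two_le_weakNorm (fun G => ?_) x
  simp only [happly]
  calc ∑' k, γ k * ‖mobiusPullback (a k) G u‖ₑ
      ≤ Γ * ellNormE' p (fun k => ‖mobiusPullback (a k) G u‖ₑ) := hγ _
    _ ≤ Γ * C * ‖G‖ₑ := by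
        rw [mul_assoc]
        gcongr
        exact hC G

theorem IsLattice.exists_sum_ellNormE'_two_mul_localMean_le (p : ℝ)
    [Fact (1 ≤ ENNReal.ofReal p)] {a : ℕ → En n} {δ R : ℝ} (ha : IsLattice a δ) (hδ : 0 < δ)
    (hα : -1 < α) (hR0 : 0 ≤ R) (hR : R < 1) :
    ∃ C : ℝ≥0, ∀ (γ : ℕ → ℝ≥0∞) (Γ : ℝ≥0∞), Γ ≠ ⊤ → IsEllDualBound p γ Γ →
      ∀ (m : ℕ) (x : Fin m → BergmanSpace n p α),
        ∑ j, ellNormE' 2 (fun k => γ k * localMean 1 R (a k) (x j)) ≤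
          C * Γ * ENNReal.ofReal (weakNorm 1 x) := by
  have hp0 : 0 < p := one_pos.trans_le (ENNReal.one_le_ofReal.1 Fact.out)
  obtain ⟨C, hC⟩ := ha.exists_ellNormE'_mobiusPullback_le p hδ hα hR0 hR
  set V := volume (ball (0 : En n) R)
  refine ⟨2 * C * V.toNNReal, fun γ Γ hΓ hγ m x => ?_⟩
  set f : Fin m → ℕ → En n → ℝ≥0∞ := fun j k u => γ k * ‖mobiusPullback (a k) (x j) u‖ₑ
  have hf (j : Fin m) (k : ℕ) : AEMeasurable (f j k) (volume.restrict (ball 0 R)) :=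
    (aemeasurable_enorm_mobiusPullback (ha.norm_lt_one k) (x j) hR.le).const_mul _
  have hmean (j : Fin m) (k : ℕ) :
      γ k * localMean 1 R (a k) (x j) = ∫⁻ u in ball 0 R, f j k u := by
    simp only [localMean, ENNReal.rpow_one, div_one]
    exact (lintegral_const_mul' _ _ (ne_top_of_le_ne_top hΓ (hγ.apply_le hp0 k))).symm
  simp only [hmean]
  calc ∑ j, ellNormE' 2 (fun k => ∫⁻ u in ball 0 R, f j k u)
      ≤ ∑ j, ∫⁻ u in ball 0 R, ellNormE' 2 (fun k => f j k u) :=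
        Finset.sum_le_sum fun j _ => ellNormE'_lintegral_le one_le_two (hf j)
    _ = ∫⁻ u in ball 0 R, ∑ j, ellNormE' 2 (fun k => f j k u) :=
        (lintegral_finsetSum' _ fun j _ =>
          (AEMeasurable.tsum fun k => (hf j k).pow_const _).pow_const _).symm
    _ ≤ 2 * (Γ * C) * ENNReal.ofReal (weakNorm 1 x) * V := by
        rw [← setLIntegral_const]
        refine setLIntegral_mono' measurableSet_ball fun u hu => ?_
        rw [mem_ball_zero_iff] at hu
        exact sum_ellNormE'_two_mul_mobiusPullback_le hα ha.norm_lt_one (hu.trans hR)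
          (hC u hu.le) hΓ hγ x
    _ = ↑(2 * C * V.toNNReal) * Γ * ENNReal.ofReal (weakNorm 1 x) := by
        rw [ENNReal.coe_mul, ENNReal.coe_mul, ENNReal.coe_toNNReal measure_ball_lt_top.ne,
          ENNReal.coe_ofNat]
        ring

end LocalMean

section CarlesonEstimate

variable {n : ℕ} {p q α δ R ρ : ℝ} [Fact (1 ≤ ENNReal.ofReal p)]

theorem enorm_mobiusPullback_le_localMean {z v : En n} {R' : ℝ} (hz : ‖z‖ < 1)
    (G : BergmanSpace n p α) (hRR' : R' < R) (hR : R ≤ 1) (hρ : 1 ≤ ρ) (hv : ‖v‖ ≤ R') :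
    ‖mobiusPullback z G v‖ₑ ≤
      (volume (ball (0 : En n) (R - R')))⁻¹ ^ (1 / ρ) * localMean ρ R z G := by
  have hρ0 : 0 < ρ := one_pos.trans_le hρ
  have hsub : ball v (R - R') ⊆ ball 0 R :=
    ball_subset_ball' (by rw [dist_zero_right]; linarith)
  have hV0 := (measure_ball_pos volume (0 : En n) (sub_pos.2 hRR')).ne'
  rw [localMean, ← ENNReal.mul_rpow_of_nonneg _ _ (by positivity), one_div,
    ENNReal.le_rpow_inv_iff hρ0, ← ENNReal.mul_le_iff_le_inv hV0 measure_ball_lt_top.ne, mul_comm]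
  calc ‖mobiusPullback z G v‖ₑ ^ ρ * volume (ball (0 : En n) (R - R'))
      ≤ ∫⁻ u in ball v (R - R'), ‖mobiusPullback z G u‖ₑ ^ ρ :=
        enorm_rpow_mul_addHaar_ball_le volume ((differentiableOn_mobiusPullback hz G).mono
          (hsub.trans (ball_subset_ball hR))) hρ
    _ ≤ ∫⁻ u in ball 0 R, ‖mobiusPullback z G u‖ₑ ^ ρ := lintegral_mono_set hsub

theorem setLIntegral_bergmanBall_rep_le {a : ℕ → En n} {k : ℕ} (hk : ‖a k‖ < 1)
    (hq : 0 < q) (μ : Measure (En n)) {G : BergmanSpace n p α} {M : ℝ≥0∞}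
    (hM : ∀ u, ‖u‖ < Real.tanh δ → ‖mobiusPullback (a k) G u‖ₑ ≤ M) :
    ∫⁻ z in bergmanBall (a k) δ, ‖BergmanSpace.rep G z‖ₑ ^ q ∂μ ≤
      (carlesonBeta n p q α δ μ a k * M) ^ q := by
  have hs := one_sub_norm_sq_pos hk
  set w := ENNReal.ofReal ((1 - ‖a k‖ ^ 2) ^ (-(((n : ℝ) + 1 + α) / p))) with hw
  have hpoint (z) (hz : z ∈ bergmanBall (a k) δ) :
      ‖BergmanSpace.rep G z‖ₑ ^ q ≤ (w * M) ^ q := by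
    obtain ⟨hz1, hzδ⟩ := (mem_bergmanBall_iff hk).1 hz
    have hpull := hM _ hzδ
    rw [enorm_mobiusPullback hk, mobius_mobius hk hz1] at hpull
    gcongr
    calc ‖BergmanSpace.rep G z‖ₑ = w * (ENNReal.ofReal
          ((1 - ‖a k‖ ^ 2) ^ (((n : ℝ) + 1 + α) / p)) * ‖BergmanSpace.rep G z‖ₑ) := by
          rw [hw, ← mul_assoc, ← ENNReal.ofReal_mul (by positivity), ← Real.rpow_add hs,
            neg_add_cancel, Real.rpow_zero, ENNReal.ofReal_one, one_mul]
      _ ≤ w * M := by gcongr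
  calc ∫⁻ z in bergmanBall (a k) δ, ‖BergmanSpace.rep G z‖ₑ ^ q ∂μ
      ≤ (w * M) ^ q * μ (bergmanBall (a k) δ) := by
        rw [← setLIntegral_const]
        exact setLIntegral_mono measurable_const hpoint
    _ = (carlesonBeta n p q α δ μ a k * M) ^ q := by
        rw [carlesonBeta, ← hw, mul_right_comm, ENNReal.mul_rpow_of_nonneg _ (_ ^ _) hq.le,
          one_div, ENNReal.rpow_inv_rpow hq.ne']

theorem IsLattice.exists_eLpNorm_rep_le (p α : ℝ) [Fact (1 ≤ ENNReal.ofReal p)] {a : ℕ → En n}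
    (ha : IsLattice a δ) (hq : 0 < q) (hRδ : Real.tanh δ < R) (hR : R ≤ 1) (hρ : 1 ≤ ρ) :
    ∃ C : ℝ≥0, ∀ μ : Measure (En n), (∀ᵐ z ∂μ, z ∈ unitBall n) → ∀ G : BergmanSpace n p α,
      eLpNorm (BergmanSpace.rep G) (ENNReal.ofReal q) μ ≤
        C * ellNormE' q (fun k => carlesonBeta n p q α δ μ a k * localMean ρ R (a k) G) := by
  set c := (volume (ball (0 : En n) (R - Real.tanh δ)))⁻¹ ^ (1 / ρ)
  have hc : c ≠ ⊤ := ENNReal.rpow_ne_top_of_nonneg (by positivity)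
    (ENNReal.inv_ne_top.2 (measure_ball_pos _ _ (sub_pos.2 hRδ)).ne')
  refine ⟨c.toNNReal, fun μ hμ G => ?_⟩
  have hcover : μ.restrict (⋃ k, bergmanBall (a k) δ) = μ :=
    Measure.restrict_eq_self_of_ae_mem (hμ.mono fun z hz => Set.mem_iUnion.2 (ha.2.1 z hz))
  rw [ENNReal.coe_toNNReal hc, ← ellNormE'_const_mul hq,
    eLpNorm_eq_lintegral_rpow_enorm_toReal (by simpa using hq) ENNReal.ofReal_ne_top,
    ENNReal.toReal_ofReal hq.le, ellNormE']
  gcongr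
  calc ∫⁻ z, ‖BergmanSpace.rep G z‖ₑ ^ q ∂μ
      ≤ ∑' k, ∫⁻ z in bergmanBall (a k) δ, ‖BergmanSpace.rep G z‖ₑ ^ q ∂μ := by
        conv_lhs => rw [← hcover]
        exact lintegral_iUnion_le _ _
    _ ≤ ∑' k, (c * (carlesonBeta n p q α δ μ a k * localMean ρ R (a k) G)) ^ q :=
        ENNReal.tsum_le_tsum fun k => by
          rw [mul_left_comm]
          exact setLIntegral_bergmanBall_rep_le (ha.norm_lt_one k) hq μ fun u hu =>
            enorm_mobiusPullback_le_localMean (ha.norm_lt_one k) G hRδ hR hρ hu.le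

end CarlesonEstimate

section Embedding

theorem SummingBoundWith.of_sum_enorm_rpow_le {X Y : Type*} [NormedAddCommGroup X]
    [NormedSpace ℂ X] [NormedAddCommGroup Y] {r : ℝ} (hr : 0 < r) {T : X → Y} {B : ℝ≥0}
    (h : ∀ (m : ℕ) (x : Fin m → X),
      ∑ j, ‖T (x j)‖ₑ ^ r ≤ (B * ENNReal.ofReal (weakNorm r x)) ^ r) :
    SummingBoundWith r r T B := by
  intro m x
  have hsum := h m x
  rw [← ENNReal.rpow_inv_le_iff hr, ← one_div, ← ENNReal.ofReal_coe_nnreal,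
    ← ENNReal.ofReal_mul B.coe_nonneg] at hsum
  simp only [← ofReal_norm, ENNReal.ofReal_rpow_of_nonneg (norm_nonneg _) hr.le] at hsum
  rwa [← ENNReal.ofReal_sum_of_nonneg fun _ _ => by positivity,
    ENNReal.ofReal_rpow_of_nonneg (by positivity) (by positivity),
    ENNReal.ofReal_le_ofReal_iff (mul_nonneg B.coe_nonneg (weakNorm_nonneg r x))] at hsum

variable {n : ℕ} {p q α : ℝ} [Fact (1 ≤ ENNReal.ofReal p)] [Fact (1 ≤ ENNReal.ofReal q)]
  {μ : Measure (En n)}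

theorem BergmanSpace.aestronglyMeasurable_rep (hμ : ∀ᵐ z ∂μ, z ∈ unitBall n)
    (G : BergmanSpace n p α) : AEStronglyMeasurable (rep G) μ := by
  rw [← Measure.restrict_eq_self_of_ae_mem hμ]
  exact (differentiableOn_rep G).continuousOn.aestronglyMeasurable measurableSet_ball

/-- The Carleson embedding `J_μ`, defined once every function of `A^p_α` belongs to `L^q(μ)`. -/
def carlesonEmbedding (hα : -1 < α) (hμ : ∀ᵐ z ∂μ, z ∈ unitBall n)
    (hL : ∀ G : BergmanSpace n p α, MemLp (BergmanSpace.rep G) (ENNReal.ofReal q) μ) :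
    BergmanSpace n p α →ₗ[ℂ] Lp ℂ (ENNReal.ofReal q) μ where
  toFun G := (hL G).toLp
  map_add' G H := by
    rw [← MemLp.toLp_add, MemLp.toLp_eq_toLp_iff]
    exact hμ.mono fun _ hz => BergmanSpace.rep_add hα G H hz
  map_smul' c G := by
    rw [RingHom.id_apply, ← MemLp.toLp_const_smul, MemLp.toLp_eq_toLp_iff]
    exact hμ.mono fun _ hz => BergmanSpace.rep_smul hα c G hz

theorem representsEmbedding_carlesonEmbedding (hα : -1 < α) (hμ : ∀ᵐ z ∂μ, z ∈ unitBall n)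
    (hL : ∀ G : BergmanSpace n p α, MemLp (BergmanSpace.rep G) (ENNReal.ofReal q) μ) :
    RepresentsEmbedding n p q α μ (carlesonEmbedding hα hμ hL) := fun G _ hg hGg =>
  (hL G).coeFn_toLp.trans (hμ.mono fun _ hz => BergmanSpace.eqOn_rep hα G hg hGg hz)

/-- The Carleson embedding `A^p_α → L^q(μ)` is well defined and `ρ`-summing, with `ρ`-summing norm
at most `B`. -/
def HasSummingEmbedding (n : ℕ) (p q α : ℝ) [Fact (1 ≤ ENNReal.ofReal p)]
    [Fact (1 ≤ ENNReal.ofReal q)] (μ : Measure (En n)) (ρ : ℝ) (B : ℝ≥0∞) : Prop :=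
  ∃ J : BergmanSpace n p α →ₗ[ℂ] Lp ℂ (ENNReal.ofReal q) μ,
    RepresentsEmbedding n p q α μ ⇑J ∧ IsSummingRS ρ ρ ⇑J ∧
      ENNReal.ofReal (summingNorm ρ ρ ⇑J) ≤ B

theorem HasSummingEmbedding.mono_const {ρ C : ℝ} {c : ℝ≥0} {S : ℝ≥0∞} (hc : c ≤ C)
    (h : HasSummingEmbedding n p q α μ ρ (c * S)) :
    HasSummingEmbedding n p q α μ ρ (ENNReal.ofReal C * S) := by
  obtain ⟨J, hJ, hsum, hle⟩ := h
  refine ⟨J, hJ, hsum, hle.trans ?_⟩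
  gcongr
  exact ENNReal.ofReal_coe_nnreal.symm.trans_le (ENNReal.ofReal_le_ofReal hc)

theorem HasSummingEmbedding.exists_summingNorm_le {r s : ℝ} {B : ℝ≥0∞}
    (h : HasSummingEmbedding n p q α μ s B) (hs : 0 < s) (hsr : s ≤ r) :
    ∃ J : BergmanSpace n p α →ₗ[ℂ] Lp ℂ (ENNReal.ofReal q) μ,
      RepresentsEmbedding n p q α μ ⇑J ∧ IsSummingRS s s ⇑J ∧
        summingNorm r r ⇑J ≤ summingNorm s s ⇑J ∧ ENNReal.ofReal (summingNorm s s ⇑J) ≤ B :=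
  let ⟨J, hJ, hsum, hle⟩ := h
  ⟨J, hJ, hsum, summingNorm_le_of_le hs hsr hsum, hle⟩

theorem hasSummingEmbedding_of_sum_le (hα : -1 < α) (hμ : ∀ᵐ z ∂μ, z ∈ unitBall n) {ρ : ℝ}
    (hρ : 0 < ρ) {B : ℝ≥0∞} (hB : B ≠ ⊤)
    (h : ∀ (m : ℕ) (x : Fin m → BergmanSpace n p α),
      ∑ j, eLpNorm (BergmanSpace.rep (x j)) (ENNReal.ofReal q) μ ^ ρ ≤
        (B * ENNReal.ofReal (weakNorm ρ x)) ^ ρ) :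
    HasSummingEmbedding n p q α μ ρ B := by
  lift B to ℝ≥0 using hB
  have hL (G : BergmanSpace n p α) : MemLp (BergmanSpace.rep G) (ENNReal.ofReal q) μ := by
    have hG := h 1 fun _ => G
    rw [Fin.sum_univ_one, ENNReal.rpow_le_rpow_iff hρ] at hG
    exact ⟨BergmanSpace.aestronglyMeasurable_rep hμ G, hG.trans_lt (by finiteness)⟩
  have hbound : SummingBoundWith ρ ρ (carlesonEmbedding hα hμ hL) B :=
    .of_sum_enorm_rpow_le hρ fun m x => by
      simpa only [carlesonEmbedding, LinearMap.coe_mk, AddHom.coe_mk, Lp.enorm_toLp] using h m x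
  refine ⟨carlesonEmbedding hα hμ hL, representsEmbedding_carlesonEmbedding hα hμ hL,
    ⟨B, B.coe_nonneg, hbound⟩, ?_⟩
  rw [← ENNReal.ofReal_coe_nnreal]
  exact ENNReal.ofReal_le_ofReal (csInf_le ⟨0, fun _ h => h.1⟩ ⟨B.coe_nonneg, hbound⟩)

end Embedding

section Estimates

variable {n : ℕ} {α δ : ℝ}

theorem IsLattice.exists_hasSummingEmbedding_of_sum_localMean (p q : ℝ)
    [Fact (1 ≤ ENNReal.ofReal p)] [Fact (1 ≤ ENNReal.ofReal q)] {a : ℕ → En n}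
    (ha : IsLattice a δ) (hα : -1 < α) {R ρ : ℝ} (hRδ : Real.tanh δ < R) (hR : R ≤ 1)
    (hρ : 1 ≤ ρ) :
    ∃ C : ℝ≥0, ∀ μ : Measure (En n), (∀ᵐ z ∂μ, z ∈ unitBall n) → ∀ B : ℝ≥0∞, B ≠ ⊤ →
      (∀ (m : ℕ) (x : Fin m → BergmanSpace n p α),
        ∑ j, ellNormE' q (fun k => carlesonBeta n p q α δ μ a k * localMean ρ R (a k) (x j)) ^ ρ ≤
          (B * ENNReal.ofReal (weakNorm ρ x)) ^ ρ) →
      HasSummingEmbedding n p q α μ ρ (C * B) := by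
  have hq : 0 < q := one_pos.trans_le (ENNReal.one_le_ofReal.1 Fact.out)
  have hρ0 : 0 < ρ := one_pos.trans_le hρ
  obtain ⟨C, hC⟩ := ha.exists_eLpNorm_rep_le p α hq hRδ hR hρ
  refine ⟨C, fun μ hμ B hB h => hasSummingEmbedding_of_sum_le hα hμ hρ0
    (ENNReal.mul_ne_top ENNReal.coe_ne_top hB) fun m x => ?_⟩
  calc ∑ j, eLpNorm (BergmanSpace.rep (x j)) (ENNReal.ofReal q) μ ^ ρ
      ≤ ∑ j, (C * ellNormE' q
          fun k => carlesonBeta n p q α δ μ a k * localMean ρ R (a k) (x j)) ^ ρ := by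
        gcongr with j
        exact hC μ hμ (x j)
    _ ≤ C ^ ρ * (B * ENNReal.ofReal (weakNorm ρ x)) ^ ρ := by
        simp only [ENNReal.mul_rpow_of_nonneg _ (ellNormE' _ _) hρ0.le, ← Finset.mul_sum]
        gcongr
        exact h m x
    _ = (C * B * ENNReal.ofReal (weakNorm ρ x)) ^ ρ := by
        rw [← ENNReal.mul_rpow_of_nonneg _ _ hρ0.le, mul_assoc]

theorem IsLattice.exists_hasSummingEmbedding_ellNormE' (p q : ℝ)
    [Fact (1 ≤ ENNReal.ofReal p)] [Fact (1 ≤ ENNReal.ofReal q)] {a : ℕ → En n}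
    (ha : IsLattice a δ) (hδ : 0 < δ) (hα : -1 < α) {r : ℝ} (hr : 1 ≤ r) :
    ∃ C : ℝ≥0, ∀ μ : Measure (En n), (∀ᵐ z ∂μ, z ∈ unitBall n) → r ≤ q →
      ellNormE' r (carlesonBeta n p q α δ μ a) ≠ ⊤ →
      HasSummingEmbedding n p q α μ r (C * ellNormE' r (carlesonBeta n p q α δ μ a)) := by
  have hr0 : 0 < r := one_pos.trans_le hr
  obtain ⟨R, hR0, hR⟩ := exists_between (max_lt one_pos (Real.tanh_lt_one δ))
  rw [max_lt_iff] at hR0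
  obtain ⟨C, hC⟩ := ha.exists_hasSummingEmbedding_of_sum_localMean p q hα hR0.2 hR.le hr
  obtain ⟨C', hmean⟩ := ha.exists_sum_localMean_rpow_le p hδ hα hR0.1.le hR hr0
  refine ⟨C * C', fun μ hμ hrq hS => ?_⟩
  rw [ENNReal.coe_mul, mul_assoc]
  refine hC μ hμ _ (by finiteness) fun m x => ?_
  rw [mul_comm (C' : ℝ≥0∞), mul_assoc]
  exact sum_ellNormE'_mul_rpow_le hr0 hrq (hmean m x)

theorem IsLattice.exists_hasSummingEmbedding_one (p q : ℝ)
    [Fact (1 ≤ ENNReal.ofReal p)] [Fact (1 ≤ ENNReal.ofReal q)] {a : ℕ → En n}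
    (ha : IsLattice a δ) (hδ : 0 < δ) (hα : -1 < α) :
    ∃ C : ℝ≥0, ∀ μ : Measure (En n), (∀ᵐ z ∂μ, z ∈ unitBall n) → ∀ S : ℝ≥0∞, S ≠ ⊤ →
      IsSquareFunctionBound p q (carlesonBeta n p q α δ μ a) S →
      HasSummingEmbedding n p q α μ 1 (C * S) := by
  obtain ⟨R, hR0, hR⟩ := exists_between (max_lt one_pos (Real.tanh_lt_one δ))
  rw [max_lt_iff] at hR0
  obtain ⟨C, hC⟩ := ha.exists_hasSummingEmbedding_of_sum_localMean p q hα hR0.2 hR.le le_rfl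
  obtain ⟨C', hmean⟩ := ha.exists_sum_ellNormE'_two_mul_localMean_le p hδ hα hR0.1.le hR
  refine ⟨C * C', fun μ hμ S hS hfac => ?_⟩
  obtain ⟨γ, Γ, Θ, hΓ, hγ, rfl, hΘ⟩ := hfac
  rw [ENNReal.coe_mul, mul_assoc]
  refine hC μ hμ _ (by finiteness) fun m x => ?_
  simp only [ENNReal.rpow_one]
  calc ∑ j, ellNormE' q (fun k => carlesonBeta n p q α δ μ a k * localMean 1 R (a k) (x j))
      ≤ ∑ j, Θ * ellNormE' 2 (fun k => γ k * localMean 1 R (a k) (x j)) :=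
        Finset.sum_le_sum fun j _ => hΘ _
    _ ≤ Θ * (C' * Γ * ENNReal.ofReal (weakNorm 1 x)) := by
        rw [← Finset.mul_sum]
        gcongr
        exact hmean γ Γ hΓ hγ m x
    _ = C' * (Θ * Γ) * ENNReal.ofReal (weakNorm 1 x) := by ring

end Estimates

theorem statement7 (n : ℕ) (hn : 1 ≤ n) (p q r α δ : ℝ)
    (hα : -1 < α) (hp : 1 ≤ p) (hq : 1 ≤ q) (hr : 1 ≤ r) (hδ : 0 < δ)
    [Fact (1 ≤ ENNReal.ofReal p)] [Fact (1 ≤ ENNReal.ofReal q)]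
    (a : ℕ → En n) (ha : IsLattice a δ) :
    ∃ C > (0 : ℝ), ∀ μ : Measure (En n), μ (unitBall n)ᶜ = 0 →
      -- (1) the case 1 ≤ q < 2
      (q < 2 →
        ellNormE' (2 * p * q / (2 * p - 2 * q + p * q)) (carlesonBeta n p q α δ μ a) < ⊤ →
        ∃ J : BergmanSpace n p α →ₗ[ℂ] Lp ℂ (ENNReal.ofReal q) μ,
          RepresentsEmbedding n p q α μ ⇑J ∧ IsSummingRS 1 1 ⇑J ∧
            summingNorm r r ⇑J ≤ summingNorm 1 1 ⇑J ∧
            ENNReal.ofReal (summingNorm 1 1 ⇑J) ≤ ENNReal.ofReal C *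
              ellNormE' (2 * p * q / (2 * p - 2 * q + p * q)) (carlesonBeta n p q α δ μ a)) ∧
      -- (2) the case q ≥ 2, p > 1
      (2 ≤ q → 1 < p →
        ellNormE' (p / (p - 1)) (carlesonBeta n p q α δ μ a) < ⊤ →
        ∃ J : BergmanSpace n p α →ₗ[ℂ] Lp ℂ (ENNReal.ofReal q) μ,
          RepresentsEmbedding n p q α μ ⇑J ∧ IsSummingRS 1 1 ⇑J ∧
            summingNorm r r ⇑J ≤ summingNorm 1 1 ⇑J ∧
            ENNReal.ofReal (summingNorm 1 1 ⇑J) ≤ ENNReal.ofReal C *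
              ellNormE' (p / (p - 1)) (carlesonBeta n p q α δ μ a)) ∧
      -- (2') the case q ≥ 2, p = 1 (ℓ^∞)
      (2 ≤ q → p = 1 →
        (⨆ k, carlesonBeta n p q α δ μ a k) < ⊤ →
        ∃ J : BergmanSpace n p α →ₗ[ℂ] Lp ℂ (ENNReal.ofReal q) μ,
          RepresentsEmbedding n p q α μ ⇑J ∧ IsSummingRS 1 1 ⇑J ∧
            summingNorm r r ⇑J ≤ summingNorm 1 1 ⇑J ∧
            ENNReal.ofReal (summingNorm 1 1 ⇑J) ≤ ENNReal.ofReal C *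
              ⨆ k, carlesonBeta n p q α δ μ a k) ∧
      -- (3) the case 1 ≤ r ≤ q
      (r ≤ q →
        ellNormE' r (carlesonBeta n p q α δ μ a) < ⊤ →
        ∃ J : BergmanSpace n p α →ₗ[ℂ] Lp ℂ (ENNReal.ofReal q) μ,
          RepresentsEmbedding n p q α μ ⇑J ∧ IsSummingRS r r ⇑J ∧
            ENNReal.ofReal (summingNorm r r ⇑J) ≤ ENNReal.ofReal C *
              ellNormE' r (carlesonBeta n p q α δ μ a)) ∧
      -- (4) the case 1 ≤ q ≤ r
      (q ≤ r →
        ellNormE' q (carlesonBeta n p q α δ μ a) < ⊤ →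
        ∃ J : BergmanSpace n p α →ₗ[ℂ] Lp ℂ (ENNReal.ofReal q) μ,
          RepresentsEmbedding n p q α μ ⇑J ∧ IsSummingRS q q ⇑J ∧
            summingNorm r r ⇑J ≤ summingNorm q q ⇑J ∧
            ENNReal.ofReal (summingNorm q q ⇑J) ≤ ENNReal.ofReal C *
              ellNormE' q (carlesonBeta n p q α δ μ a)) := by
  obtain ⟨C₁, h₁⟩ := ha.exists_hasSummingEmbedding_one p q hδ hα
  obtain ⟨C₂, h₂⟩ := ha.exists_hasSummingEmbedding_ellNormE' p q hδ hα hr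
  obtain ⟨C₃, h₃⟩ := ha.exists_hasSummingEmbedding_ellNormE' p q hδ hα hq
  have hC₁ := C₁.coe_nonneg
  have hC₂ := C₂.coe_nonneg
  have hC₃ := C₃.coe_nonneg
  refine ⟨C₁ + C₂ + C₃ + 1, by positivity, fun μ hμ => ?_⟩
  have hμ' : ∀ᵐ z ∂μ, z ∈ unitBall n := mem_ae_iff.2 hμ
  have hone {S : ℝ≥0∞} (hS : S < ⊤)
      (hfac : IsSquareFunctionBound p q (carlesonBeta n p q α δ μ a) S) :=
    ((h₁ μ hμ' S hS.ne hfac).mono_const (C := C₁ + C₂ + C₃ + 1)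
      (by linarith)).exists_summingNorm_le one_pos hr
  refine ⟨fun hq2 hβ => ?_, fun hq2 hp1 hβ => ?_, fun hq2 hp1 hβ => ?_, fun hrq hβ => ?_,
    fun hqr hβ => ?_⟩
  · exact hone hβ (isSquareFunctionBound_of_lt_two hp (one_pos.trans_le hq) hq2 hβ.ne)
  · have hconj := (Real.HolderConjugate.conjExponent hp1).symm
    exact hone hβ ((isEllDualBound_ellNormE' hconj _).isSquareFunctionBound hq2 hβ.ne)
  · subst hp1
    exact hone hβ ((isEllDualBound_one_iSup _).isSquareFunctionBound hq2 hβ.ne)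
  · exact (h₂ μ hμ' hrq hβ.ne).mono_const (by linarith)
  · exact ((h₃ μ hμ' le_rfl hβ.ne).mono_const (by linarith)).exists_summingNorm_le
      (one_pos.trans_le hq) hqr
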